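/- For any constant 0 < c < 1, if q is a squarefree positive integer with φ(q) > 8c^{-1}e²(log m)², then for m sufficiently large, the number of m-tuples a ∈ ((ℤ/qℤ)^×)^m such that π(x;q,a) → ∞ as x → ∞ is at least ((1-c)c⁵ m / (512 e^{10} (log m)^{10})) · φ(q)(φ(q)-1). -/

import Mathlib

open Filter

/-- `π(x; q, a)`: the number of indices `n` with `p_n ≤ x` such that the `m` consecutive
primes `p_n, p_{n+1}, …, p_{n+m-1}` satisfy `p_{n+i} ≡ a_i (mod q)` for all `i`. -/
noncomputable def consecCount (q m : ℕ) (a : Fin m → (ZMod q)ˣ) (x : ℝ) : ℕ :=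
  Set.ncard {n : ℕ | (Nat.nth Nat.Prime n : ℝ) ≤ x ∧
    ∀ i : Fin m, ((Nat.nth Nat.Prime (n + (i : ℕ)) : ℕ) : ZMod q) = (a i : ZMod q)}

/-!
Call a word of residues recurrent if consecutive primes spell it infinitely often. Fix a length `k`
and consider the runs of `k` consecutive primes up to `X` that span at most `4 k log X`. By
Chebyshev's bound and pigeonhole on gaps there are `≫ X / log X` of them. On the other hand a
Selberg sieve, followed by summation over all gap patterns compatible with a given word modulo `q`,
shows that each single word accounts for at most `(A k ^ (3/2) / φ(q)) ^ k * X / log X` of them.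
Words that are not recurrent contribute boundedly many, so there are at least
`(φ(q) / (A k ^ (3/2))) ^ k` recurrent words of length `k`. Every recurrent word extends to a
recurrent word of any greater length `m`; taking `k` close to `log m` gives `m * φ(q) ^ 2` of them
as soon as `φ(q) ≥ (log m) ^ 2` and `m` is large.
-/

section PeriodicSums

open Finset

variable {ι R : Type*} [CommSemiring R]

theorem sum_range_mul_of_periodic {m n : ℕ} (hmn : m.Coprime n) {f g : ℕ → R}
    (hf : Function.Periodic f m) (hg : Function.Periodic g n) :
    ∑ t ∈ range (m * n), f t * g t = (∑ t ∈ range m, f t) * ∑ t ∈ range n, g t := by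
  rcases Nat.eq_zero_or_pos m with rfl | hm
  · simp
  rcases Nat.eq_zero_or_pos n with rfl | hn
  · simp
  rw [sum_mul_sum, ← sum_product']
  refine sum_nbij (fun t => (t % m, t % n)) ?_ ?_ ?_ ?_
  · intro t _
    simp [Nat.mod_lt _ hm, Nat.mod_lt _ hn]
  · intro s hs t ht hst
    simp only [coe_range, Set.mem_Iio, Prod.mk.injEq] at hs ht hst
    exact ((Nat.modEq_and_modEq_iff_modEq_mul hmn).1 hst).eq_of_lt_of_lt hs ht
  · rintro ⟨u, v⟩ huv
    simp only [coe_product, coe_range, Set.mem_prod, Set.mem_Iio] at huv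
    obtain ⟨hu, hv⟩ := (Nat.chineseRemainder hmn u v).2
    refine ⟨Nat.chineseRemainder hmn u v, ?_, Prod.ext ?_ ?_⟩
    · simpa using Nat.chineseRemainder_lt_mul hmn u v hm.ne' hn.ne'
    · exact Eq.trans hu (Nat.mod_eq_of_lt huv.1)
    · exact Eq.trans hv (Nat.mod_eq_of_lt huv.2)
  · intro t _
    simp only [hf.map_mod_nat, hg.map_mod_nat]

theorem periodic_prod_prod {s : Finset ι} {n : ι → ℕ} {f : ι → ℕ → R}
    (hf : ∀ i ∈ s, Function.Periodic (f i) (n i)) :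
    Function.Periodic (fun t => ∏ i ∈ s, f i t) (∏ i ∈ s, n i) := by
  intro t
  refine prod_congr rfl fun i hi => ?_
  obtain ⟨c, hc⟩ := dvd_prod_of_mem n hi
  rw [hc, mul_comm]
  exact (hf i hi).nat_mul c t

theorem sum_range_prod_prod_of_periodic {s : Finset ι} {n : ι → ℕ} {f : ι → ℕ → R}
    (hn : (s : Set ι).Pairwise fun i j => (n i).Coprime (n j))
    (hf : ∀ i ∈ s, Function.Periodic (f i) (n i)) :
    ∑ t ∈ range (∏ i ∈ s, n i), ∏ i ∈ s, f i t = ∏ i ∈ s, ∑ t ∈ range (n i), f i t := by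
  induction s using Finset.cons_induction with
  | empty => simp
  | cons i s hi ih =>
    simp only [forall_mem_cons, coe_cons] at hf hn
    have hcoprime : (n i).Coprime (∏ j ∈ s, n j) := Nat.Coprime.prod_right fun j hj =>
      hn (Set.mem_insert _ _) (Set.mem_insert_of_mem _ hj) fun h => hi (h ▸ hj)
    simp only [prod_cons]
    rw [← ih (hn.mono (Set.subset_insert _ _)) hf.2,
      sum_range_mul_of_periodic hcoprime hf.1 (periodic_prod_prod hf.2)]

theorem sum_range_mul_period {f : ℕ → R} {Q : ℕ} (hf : Function.Periodic f Q) (c : ℕ) :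
    ∑ t ∈ range (Q * c), f t = c * ∑ t ∈ range Q, f t := by
  induction c with
  | zero => simp
  | succ c ih =>
    have hshift (t : ℕ) : f (Q * c + t) = f t := by
      rw [add_comm, mul_comm]
      exact hf.nat_mul c t
    simp only [Nat.mul_succ, sum_range_add, ih, hshift, Nat.cast_succ, add_one_mul]

theorem sum_range_le_of_periodic {F : ℕ → ℝ} {Q : ℕ} (hQ : 0 < Q) (hF : Function.Periodic F Q)
    {M μ : ℝ} (hM : ∀ t, |F t| ≤ M) (hμ : 0 ≤ μ) (hmean : ∑ t ∈ range Q, F t = Q * μ) (N : ℕ) :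
    ∑ t ∈ range N, F t ≤ N * μ + Q * M := by
  have hM0 : 0 ≤ M := (abs_nonneg _).trans (hM 0)
  have hrest : ∑ t ∈ range (N % Q), F (Q * (N / Q) + t) ≤ Q * M :=
    calc ∑ t ∈ range (N % Q), F (Q * (N / Q) + t) ≤ ∑ _t ∈ range (N % Q), M :=
          sum_le_sum fun t _ => (le_abs_self _).trans (hM _)
      _ = (N % Q : ℕ) * M := by simp
      _ ≤ Q * M := by gcongr; exact (Nat.mod_lt N hQ).le
  have hfull : ((N / Q : ℕ) : ℝ) * (Q * μ) ≤ N * μ := by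
    rw [← mul_assoc]
    gcongr
    exact_mod_cast Nat.div_mul_le_self N Q
  conv_lhs => rw [← Nat.div_add_mod N Q, sum_range_add, sum_range_mul_period hF, hmean]
  exact add_le_add hfull hrest

theorem sum_range_natCast_zmod {M : Type*} [AddCommMonoid M] (l : ℕ) [NeZero l] (g : ZMod l → M) :
    ∑ t ∈ range l, g t = ∑ x, g x := by
  rw [← Fin.sum_univ_eq_sum_range (fun t => g t) l,
    ← (ZMod.finEquiv l).toEquiv.sum_comp]
  refine sum_congr rfl fun x _ => congrArg g ?_
  obtain ⟨k, rfl⟩ := Nat.exists_eq_succ_of_ne_zero (NeZero.ne l)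
  exact Fin.cast_val_eq_self x

end PeriodicSums

section Sieve

open Finset

variable {Ω : (l : ℕ) → Finset (ZMod l)} {P : Finset ℕ}

/-- The local density ratio `ω(l) / (l - ω(l))` of Selberg's sieve, where `ω(l)` is the number of
residue classes `Ω l` removed modulo `l`. -/
noncomputable def sieveRatio (Ω : (l : ℕ) → Finset (ZMod l)) (l : ℕ) : ℝ :=
  #(Ω l) / (l - #(Ω l))

/-- The mean-zero function modulo `l` that equals `1` off the removed classes `Ω l`. Products of
these over sets of primes are the orthogonal system behind the sieve. -/
noncomputable def sieveFactor (Ω : (l : ℕ) → Finset (ZMod l)) (l t : ℕ) : ℝ :=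
  if (t : ZMod l) ∈ Ω l then 1 - l / #(Ω l) else 1

/-- The squarefree moduli of level at most `z` in the sieve, encoded as sets of primes of `P`. -/
def sieveLevel (P : Finset ℕ) (z : ℕ) : Finset (Finset ℕ) :=
  {D ∈ P.powerset | ∏ l ∈ D, l ≤ z}

/-- The denominator `∑_{d ≤ z} ∏_{l ∣ d} ω(l) / (l - ω(l))` in the Selberg sieve bound. -/
noncomputable def sieveSum (Ω : (l : ℕ) → Finset (ZMod l)) (P : Finset ℕ) (z : ℕ) : ℝ :=
  ∑ D ∈ sieveLevel P z, ∏ l ∈ D, sieveRatio Ω l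

/-- The natural numbers below `N` avoiding all the removed classes modulo the primes of `P`. -/
def sifted (Ω : (l : ℕ) → Finset (ZMod l)) (P : Finset ℕ) (N : ℕ) : Finset ℕ :=
  {t ∈ range N | ∀ l ∈ P, (t : ZMod l) ∉ Ω l}

/-- The sieve conditions: `P` consists of primes, and modulo each of them at least one and at most
half of the residue classes are removed. -/
structure IsSieveProblem (Ω : (l : ℕ) → Finset (ZMod l)) (P : Finset ℕ) : Prop where
  prime : ∀ l ∈ P, l.Prime
  nonempty : ∀ l ∈ P, (Ω l).Nonempty
  two_mul_card_le : ∀ l ∈ P, 2 * #(Ω l) ≤ l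

theorem periodic_sieveFactor (Ω : (l : ℕ) → Finset (ZMod l)) (l : ℕ) :
    Function.Periodic (sieveFactor Ω l) l := by
  intro t
  simp [sieveFactor]

theorem subset_of_mem_sieveLevel {D : Finset ℕ} {z : ℕ} (hD : D ∈ sieveLevel P z) : D ⊆ P :=
  mem_powerset.1 (mem_filter.1 hD).1

theorem prod_le_of_mem_sieveLevel {D : Finset ℕ} {z : ℕ} (hD : D ∈ sieveLevel P z) :
    ∏ l ∈ D, l ≤ z :=
  (mem_filter.1 hD).2

theorem card_sieveLevel_le (hP : ∀ l ∈ P, l.Prime) (z : ℕ) : #(sieveLevel P z) ≤ z := by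
  have hprime {D : Finset ℕ} (hD : D ∈ sieveLevel P z) : ∀ l ∈ D, l.Prime :=
    fun l hl => hP l (subset_of_mem_sieveLevel hD hl)
  refine (card_le_card_of_injOn (t := Icc 1 z) (fun D => ∏ l ∈ D, l) (fun D hD => ?_)
    fun D hD D' hD' h => ?_).trans_eq (by simp)
  · exact mem_Icc.2 ⟨prod_pos fun l hl => (hprime hD l hl).pos, prod_le_of_mem_sieveLevel hD⟩
  · rw [← Nat.primeFactors_prod (hprime hD), ← Nat.primeFactors_prod (hprime hD')]
    exact congrArg Nat.primeFactors h

/-- The factor at `l` of the product of the orthogonal functions attached to `D` and `D'`. -/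
noncomputable def sievePairFactor (Ω : (l : ℕ) → Finset (ZMod l)) (D D' : Finset ℕ)
    (l t : ℕ) : ℝ :=
  (if l ∈ D then sieveFactor Ω l t else 1) * if l ∈ D' then sieveFactor Ω l t else 1

theorem prod_sieveFactor_mul_prod_sieveFactor (D D' : Finset ℕ) (t : ℕ) :
    (∏ l ∈ D, sieveFactor Ω l t) * ∏ l ∈ D', sieveFactor Ω l t =
      ∏ l ∈ D ∪ D', sievePairFactor Ω D D' l t := by
  simp only [sievePairFactor]
  rw [prod_mul_distrib, prod_ite_mem, prod_ite_mem, union_inter_cancel_left,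
    union_inter_cancel_right]

theorem periodic_sievePairFactor (D D' : Finset ℕ) (l : ℕ) :
    Function.Periodic (sievePairFactor Ω D D' l) l := by
  intro t
  simp only [sievePairFactor, periodic_sieveFactor Ω l t]

theorem prod_union_le_mul {D D' : Finset ℕ} (hD : ∀ l ∈ D, 1 ≤ l) :
    ∏ l ∈ D ∪ D', l ≤ (∏ l ∈ D, l) * ∏ l ∈ D', l := by
  rw [← prod_union_inter]
  exact Nat.le_mul_of_pos_right _ (prod_pos fun l hl => hD l (mem_inter.1 hl).1)

theorem card_sifted_mul_sieveSum_sq_le (Ω : (l : ℕ) → Finset (ZMod l)) (P : Finset ℕ) (z N : ℕ) :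
    (#(sifted Ω P N) : ℝ) * sieveSum Ω P z ^ 2 ≤
      ∑ t ∈ range N, (∑ D ∈ sieveLevel P z, (∏ l ∈ D, sieveRatio Ω l) *
        ∏ l ∈ D, sieveFactor Ω l t) ^ 2 := by
  rw [← nsmul_eq_mul, ← sum_const]
  refine le_trans (le_of_eq (sum_congr rfl fun t ht => congrArg (· ^ 2) ?_))
    (sum_le_sum_of_subset_of_nonneg (filter_subset _ _) fun t _ _ => sq_nonneg _)
  refine sum_congr rfl fun D hD => ?_
  have hone : ∏ l ∈ D, sieveFactor Ω l t = 1 := prod_eq_one fun l hl =>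
    if_neg ((mem_filter.1 ht).2 l (subset_of_mem_sieveLevel hD hl))
  rw [hone, mul_one]

theorem sum_powerset_prod_mul_sum {ι : Type*} {s : Finset ι} {h : ι → ℝ} (c : ι → ℝ)
    (hh : ∀ i ∈ s, 1 + h i ≠ 0) :
    ∑ D ∈ s.powerset, (∏ i ∈ D, h i) * ∑ i ∈ D, c i =
      (∏ i ∈ s, (1 + h i)) * ∑ i ∈ s, c i * (h i / (1 + h i)) := by
  classical
  induction s using Finset.induction_on with
  | empty => simp
  | insert p s hp ih =>
    rw [forall_mem_insert] at hh
    have hwith : ∑ D ∈ s.powerset, (∏ i ∈ insert p D, h i) * ∑ i ∈ insert p D, c i =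
        h p * c p * (∏ i ∈ s, (1 + h i)) +
          h p * ∑ D ∈ s.powerset, (∏ i ∈ D, h i) * ∑ i ∈ D, c i := by
      rw [prod_one_add, mul_sum, mul_sum, ← sum_add_distrib]
      refine sum_congr rfl fun D hD => ?_
      have hpD : p ∉ D := fun hpD => hp (mem_powerset.1 hD hpD)
      rw [prod_insert hpD, sum_insert hpD]
      ring
    rw [sum_powerset_insert hp, hwith, ih hh.2, prod_insert hp, sum_insert hp]
    have := hh.1
    field_simp
    ring

namespace IsSieveProblem

theorem mono (h : IsSieveProblem Ω P) {D : Finset ℕ} (hD : D ⊆ P) : IsSieveProblem Ω D where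
  prime l hl := h.prime l (hD hl)
  nonempty l hl := h.nonempty l (hD hl)
  two_mul_card_le l hl := h.two_mul_card_le l (hD hl)

theorem one_le_card (h : IsSieveProblem Ω P) {l : ℕ} (hl : l ∈ P) : (1 : ℝ) ≤ #(Ω l) := by
  exact_mod_cast (h.nonempty l hl).card_pos

theorem two_mul_card_le_cast (h : IsSieveProblem Ω P) {l : ℕ} (hl : l ∈ P) :
    (2 : ℝ) * #(Ω l) ≤ l := by
  exact_mod_cast h.two_mul_card_le l hl

theorem sieveRatio_pos (h : IsSieveProblem Ω P) {l : ℕ} (hl : l ∈ P) : 0 < sieveRatio Ω l :=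
  div_pos (by linarith [h.one_le_card hl])
    (by linarith [h.one_le_card hl, h.two_mul_card_le_cast hl])

theorem sieveRatio_le_one (h : IsSieveProblem Ω P) {l : ℕ} (hl : l ∈ P) : sieveRatio Ω l ≤ 1 :=
  div_le_one_of_le₀ (by linarith [h.two_mul_card_le_cast hl])
    (by linarith [h.one_le_card hl, h.two_mul_card_le_cast hl])

theorem prod_sieveRatio_pos (h : IsSieveProblem Ω P) : 0 < ∏ l ∈ P, sieveRatio Ω l :=
  prod_pos fun _ hl => h.sieveRatio_pos hl

theorem prod_sieveRatio_le_one (h : IsSieveProblem Ω P) : ∏ l ∈ P, sieveRatio Ω l ≤ 1 :=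
  prod_le_one (fun _ hl => (h.sieveRatio_pos hl).le) fun _ hl => h.sieveRatio_le_one hl

theorem abs_sieveFactor_le (h : IsSieveProblem Ω P) {l : ℕ} (hl : l ∈ P) (t : ℕ) :
    |sieveFactor Ω l t| ≤ l := by
  have hone := h.one_le_card hl
  have htwo := h.two_mul_card_le_cast hl
  have hle : (l : ℝ) / #(Ω l) ≤ l := div_le_self (by linarith) hone
  have hnonneg : 0 ≤ (l : ℝ) / #(Ω l) := by positivity
  unfold sieveFactor
  split_ifs <;> rw [abs_le] <;> constructor <;> linarith

theorem sum_sieveFactor (h : IsSieveProblem Ω P) {l : ℕ} (hl : l ∈ P) :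
    ∑ t ∈ range l, sieveFactor Ω l t = 0 := by
  have := NeZero.mk (h.prime l hl).ne_zero
  have hcard : (#(Ω l) : ℝ) ≠ 0 := by linarith [h.one_le_card hl]
  have hsplit (x : ZMod l) : (if x ∈ Ω l then 1 - (l : ℝ) / #(Ω l) else 1) =
      1 - if x ∈ Ω l then (l : ℝ) / #(Ω l) else 0 := by split_ifs <;> ring
  simp only [sieveFactor]
  rw [sum_range_natCast_zmod l fun x => if x ∈ Ω l then 1 - (l : ℝ) / #(Ω l) else 1]
  simp only [hsplit, sum_sub_distrib, sum_ite_mem, sum_const, nsmul_eq_mul, univ_inter, card_univ,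
    ZMod.card, mul_one, mul_div_cancel₀ _ hcard, sub_self]

theorem sum_sieveFactor_mul_self (h : IsSieveProblem Ω P) {l : ℕ} (hl : l ∈ P) :
    ∑ t ∈ range l, sieveFactor Ω l t * sieveFactor Ω l t = l * (sieveRatio Ω l)⁻¹ := by
  have := NeZero.mk (h.prime l hl).ne_zero
  have hone := h.one_le_card hl
  have hcard : (#(Ω l) : ℝ) ≠ 0 := by linarith
  have hsplit (t : ℕ) : sieveFactor Ω l t * sieveFactor Ω l t =
      1 + if (t : ZMod l) ∈ Ω l then (1 - (l : ℝ) / #(Ω l)) ^ 2 - 1 else 0 := by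
    unfold sieveFactor
    split_ifs <;> ring
  simp only [hsplit]
  rw [sum_range_natCast_zmod l fun x =>
    1 + if x ∈ Ω l then (1 - (l : ℝ) / #(Ω l)) ^ 2 - 1 else 0]
  simp only [sum_add_distrib, sum_ite_mem, sum_const, nsmul_eq_mul, univ_inter, card_univ,
    ZMod.card, sieveRatio]
  field_simp
  ring

theorem abs_prod_sieveFactor_le (h : IsSieveProblem Ω P) (t : ℕ) :
    |∏ l ∈ P, sieveFactor Ω l t| ≤ (∏ l ∈ P, l : ℕ) := by
  rw [abs_prod, Nat.cast_prod]
  exact prod_le_prod (fun _ _ => abs_nonneg _) fun l hl => h.abs_sieveFactor_le hl t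

theorem one_le_sieveSum (h : IsSieveProblem Ω P) {z : ℕ} (hz : 1 ≤ z) : 1 ≤ sieveSum Ω P z := by
  have hempty : ∅ ∈ sieveLevel P z := by simp [sieveLevel, hz]
  simpa [sieveSum] using single_le_sum (f := fun D => ∏ l ∈ D, sieveRatio Ω l)
    (fun D hD => (h.mono (subset_of_mem_sieveLevel hD)).prod_sieveRatio_pos.le) hempty

theorem sum_prod_sievePairFactor (h : IsSieveProblem Ω P) {D D' : Finset ℕ} (hD : D ⊆ P)
    (hD' : D' ⊆ P) :
    ∑ t ∈ range (∏ l ∈ D ∪ D', l), ∏ l ∈ D ∪ D', sievePairFactor Ω D D' l t =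
      (∏ l ∈ D ∪ D', l : ℕ) * if D = D' then (∏ l ∈ D, sieveRatio Ω l)⁻¹ else 0 := by
  have hcoprime : ((D ∪ D' : Finset ℕ) : Set ℕ).Pairwise fun l l' => Nat.Coprime l l' :=
    fun l hl l' hl' hne => (Nat.coprime_primes (h.prime l (union_subset hD hD' hl))
      (h.prime l' (union_subset hD hD' hl'))).2 hne
  rw [sum_range_prod_prod_of_periodic hcoprime fun l _ => periodic_sievePairFactor D D' l]
  split_ifs with hDD
  · subst hDD
    rw [union_self, ← prod_inv_distrib, Nat.cast_prod, ← prod_mul_distrib]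
    refine prod_congr rfl fun l hl => ?_
    simp only [sievePairFactor, hl, if_true, h.sum_sieveFactor_mul_self (hD hl)]
  · rw [mul_zero]
    obtain ⟨l, hl⟩ : (symmDiff D D').Nonempty := nonempty_iff_ne_empty.2 fun he =>
      hDD (symmDiff_eq_bot.1 he)
    have hlu : l ∈ D ∪ D' := symmDiff_subset_union hl
    refine prod_eq_zero hlu ?_
    rw [← h.sum_sieveFactor (union_subset hD hD' hlu)]
    rcases mem_symmDiff.1 hl with hl | hl <;> simp [sievePairFactor, hl]

theorem sum_prod_sieveFactor_mul_le (h : IsSieveProblem Ω P) {D D' : Finset ℕ} {z : ℕ}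
    (hD : D ∈ sieveLevel P z) (hD' : D' ∈ sieveLevel P z) (N : ℕ) :
    ∑ t ∈ range N, (∏ l ∈ D, sieveFactor Ω l t) * ∏ l ∈ D', sieveFactor Ω l t ≤
      N * (if D = D' then (∏ l ∈ D, sieveRatio Ω l)⁻¹ else 0) + (z : ℝ) ^ 4 := by
  have hDP := subset_of_mem_sieveLevel hD
  have hDP' := subset_of_mem_sieveLevel hD'
  have habs {E : Finset ℕ} (hE : E ∈ sieveLevel P z) (t : ℕ) : |∏ l ∈ E, sieveFactor Ω l t| ≤ z :=
    ((h.mono (subset_of_mem_sieveLevel hE)).abs_prod_sieveFactor_le t).trans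
      (by exact_mod_cast prod_le_of_mem_sieveLevel hE)
  have hperiod : ((∏ l ∈ D ∪ D', l : ℕ) : ℝ) ≤ (z : ℝ) ^ 2 := by
    rw [pow_two]
    exact_mod_cast (prod_union_le_mul fun l hl => (h.prime l (hDP hl)).one_le).trans
      (Nat.mul_le_mul (prod_le_of_mem_sieveLevel hD) (prod_le_of_mem_sieveLevel hD'))
  have hbound (t : ℕ) : |∏ l ∈ D ∪ D', sievePairFactor Ω D D' l t| ≤ (z : ℝ) ^ 2 := by
    rw [← prod_sieveFactor_mul_prod_sieveFactor, abs_mul, pow_two]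
    exact mul_le_mul (habs hD t) (habs hD' t) (abs_nonneg _) (Nat.cast_nonneg z)
  have hmean : 0 ≤ if D = D' then (∏ l ∈ D, sieveRatio Ω l)⁻¹ else 0 := by
    split_ifs
    exacts [(inv_pos.2 (h.mono hDP).prod_sieveRatio_pos).le, le_rfl]
  simp only [prod_sieveFactor_mul_prod_sieveFactor]
  refine (sum_range_le_of_periodic
    (prod_pos fun l hl => (h.prime l (union_subset hDP hDP' hl)).pos)
    (periodic_prod_prod fun l _ => periodic_sievePairFactor D D' l) hbound hmean
    (h.sum_prod_sievePairFactor hDP hDP') N).trans ?_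
  gcongr
  calc ((∏ l ∈ D ∪ D', l : ℕ) : ℝ) * (z : ℝ) ^ 2 ≤ (z : ℝ) ^ 2 * (z : ℝ) ^ 2 := by gcongr
    _ = (z : ℝ) ^ 4 := by ring

theorem sum_sq_sieve_le (h : IsSieveProblem Ω P) (z N : ℕ) :
    ∑ t ∈ range N, (∑ D ∈ sieveLevel P z, (∏ l ∈ D, sieveRatio Ω l) *
      ∏ l ∈ D, sieveFactor Ω l t) ^ 2 ≤ N * sieveSum Ω P z + (z : ℝ) ^ 6 := by
  set 𝒟 := sieveLevel P z
  set w : Finset ℕ → ℝ := fun D => ∏ l ∈ D, sieveRatio Ω l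
  have hw {D : Finset ℕ} (hD : D ∈ 𝒟) : 0 < w D ∧ w D ≤ 1 :=
    have hsub := h.mono (subset_of_mem_sieveLevel hD)
    ⟨hsub.prod_sieveRatio_pos, hsub.prod_sieveRatio_le_one⟩
  have hterm {D D' : Finset ℕ} (hD : D ∈ 𝒟) (hD' : D' ∈ 𝒟) :
      w D * w D' * ∑ t ∈ range N, (∏ l ∈ D, sieveFactor Ω l t) * ∏ l ∈ D', sieveFactor Ω l t ≤
        (if D = D' then N * w D else 0) + (z : ℝ) ^ 4 := by
    obtain ⟨hpos, hle⟩ := hw hD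
    obtain ⟨hpos', hle'⟩ := hw hD'
    refine (mul_le_mul_of_nonneg_left (h.sum_prod_sieveFactor_mul_le hD hD' N)
      (by positivity)).trans ?_
    rw [mul_add]
    refine add_le_add (le_of_eq ?_) (mul_le_of_le_one_left (by positivity)
      (mul_le_one₀ hle hpos'.le hle'))
    split_ifs with hDD
    · subst hDD
      change w D * w D * (N * (w D)⁻¹) = N * w D
      field_simp
    · simp
  calc ∑ t ∈ range N, (∑ D ∈ 𝒟, w D * ∏ l ∈ D, sieveFactor Ω l t) ^ 2
      = ∑ D ∈ 𝒟, ∑ D' ∈ 𝒟, w D * w D' *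
          ∑ t ∈ range N, (∏ l ∈ D, sieveFactor Ω l t) * ∏ l ∈ D', sieveFactor Ω l t := by
        simp_rw [pow_two, sum_mul_sum, mul_sum]
        rw [sum_comm]
        refine sum_congr rfl fun D _ => ?_
        rw [sum_comm]
        exact sum_congr rfl fun D' _ => sum_congr rfl fun t _ => by ring
    _ ≤ ∑ D ∈ 𝒟, ∑ D' ∈ 𝒟, ((if D = D' then N * w D else 0) + (z : ℝ) ^ 4) :=
        sum_le_sum fun D hD => sum_le_sum fun D' hD' => hterm hD hD'
    _ = N * sieveSum Ω P z + #𝒟 * #𝒟 * (z : ℝ) ^ 4 := by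
        simp_rw [sum_add_distrib, sum_ite_eq, sum_const, nsmul_eq_mul]
        rw [sum_congr rfl fun D hD => if_pos hD, ← mul_sum, mul_assoc]
        rfl
    _ ≤ N * sieveSum Ω P z + z * z * (z : ℝ) ^ 4 := by
        gcongr <;> exact card_sieveLevel_le h.prime z
    _ = N * sieveSum Ω P z + (z : ℝ) ^ 6 := by ring

theorem card_sifted_mul_sieveSum_le (h : IsSieveProblem Ω P) {z : ℕ} (hz : 1 ≤ z) (N : ℕ) :
    (#(sifted Ω P N) : ℝ) * sieveSum Ω P z ≤ N + (z : ℝ) ^ 6 := by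
  have hS := h.one_le_sieveSum hz
  have hz6 : (z : ℝ) ^ 6 ≤ (z : ℝ) ^ 6 * sieveSum Ω P z := le_mul_of_one_le_right (by positivity) hS
  refine le_of_mul_le_mul_right ?_ (zero_lt_one.trans_le hS)
  nlinarith [(card_sifted_mul_sieveSum_sq_le Ω P z N).trans (h.sum_sq_sieve_le z N)]

theorem one_add_sieveRatio (h : IsSieveProblem Ω P) {l : ℕ} (hl : l ∈ P) :
    1 + sieveRatio Ω l = (1 - (#(Ω l) : ℝ) / l)⁻¹ := by
  have hone := h.one_le_card hl
  have htwo := h.two_mul_card_le_cast hl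
  have hdiff : (l : ℝ) - #(Ω l) ≠ 0 := by linarith
  have hl0 : (l : ℝ) ≠ 0 := by linarith
  unfold sieveRatio
  field_simp
  simp

theorem sum_log_mul_sieveRatio (h : IsSieveProblem Ω P) :
    ∑ l ∈ P, Real.log l * (sieveRatio Ω l / (1 + sieveRatio Ω l)) =
      ∑ l ∈ P, #(Ω l) * (Real.log l / l) := by
  refine sum_congr rfl fun l hl => ?_
  have hone := h.one_le_card hl
  have htwo := h.two_mul_card_le_cast hl
  have hdiff : (l : ℝ) - #(Ω l) ≠ 0 := by linarith
  have hl0 : (l : ℝ) ≠ 0 := by linarith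
  rw [h.one_add_sieveRatio hl, sieveRatio]
  field_simp

theorem sum_prod_sieveRatio_mul_log_le (h : IsSieveProblem Ω P) {z : ℕ} (hz : 1 ≤ z) :
    (∑ D ∈ P.powerset with ¬ ∏ l ∈ D, l ≤ z, ∏ l ∈ D, sieveRatio Ω l) * Real.log z ≤
      ∑ D ∈ P.powerset, (∏ l ∈ D, sieveRatio Ω l) * ∑ l ∈ D, Real.log l := by
  have hpos {D : Finset ℕ} (hD : D ∈ P.powerset) : 0 ≤ ∏ l ∈ D, sieveRatio Ω l :=
    (h.mono (mem_powerset.1 hD)).prod_sieveRatio_pos.le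
  rw [sum_mul]
  refine (sum_le_sum fun D hD => ?_).trans (sum_le_sum_of_subset_of_nonneg (filter_subset _ _)
    fun D hD _ => mul_nonneg (hpos hD) (sum_nonneg fun l _ => Real.log_natCast_nonneg l))
  obtain ⟨hDP, hDz⟩ := mem_filter.1 hD
  refine mul_le_mul_of_nonneg_left ?_ (hpos hDP)
  rw [← Real.log_prod fun l hl =>
    Nat.cast_ne_zero.2 (h.prime l (mem_powerset.1 hDP hl)).ne_zero, ← Nat.cast_prod]
  exact Real.log_le_log (by exact_mod_cast hz) (by exact_mod_cast (not_le.1 hDz).le)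

/- Rankin's trick with weight `log d / log z` shows that the moduli `d > z` contribute at most half
of the full product. -/
theorem inv_prod_le_two_mul_sieveSum (h : IsSieveProblem Ω P) {z : ℕ} (hz : 2 ≤ z)
    (hlog : 2 * ∑ l ∈ P, #(Ω l) * (Real.log l / l) ≤ Real.log z) :
    (∏ l ∈ P, (1 - (#(Ω l) : ℝ) / l))⁻¹ ≤ 2 * sieveSum Ω P z := by
  have hprod : (∏ l ∈ P, (1 - (#(Ω l) : ℝ) / l))⁻¹ = ∏ l ∈ P, (1 + sieveRatio Ω l) := by
    rw [← prod_inv_distrib]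
    exact prod_congr rfl fun l hl => (h.one_add_sieveRatio hl).symm
  rw [hprod]
  set E := ∏ l ∈ P, (1 + sieveRatio Ω l) with hE
  have hE0 : 0 < E := prod_pos fun l hl => by linarith [h.sieveRatio_pos hl]
  have hsplit : E = sieveSum Ω P z +
      ∑ D ∈ P.powerset with ¬ ∏ l ∈ D, l ≤ z, ∏ l ∈ D, sieveRatio Ω l := by
    rw [sieveSum, sieveLevel, sum_filter_add_sum_filter_not, hE, prod_one_add]
  have htail := h.sum_prod_sieveRatio_mul_log_le (z := z) (by lia)
  rw [sum_powerset_prod_mul_sum _ fun l hl => by linarith [h.sieveRatio_pos hl],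
    h.sum_log_mul_sieveRatio, ← hE] at htail
  have hlogz : 0 < Real.log z := Real.log_pos (by exact_mod_cast hz)
  have hhalf : (∑ D ∈ P.powerset with ¬ ∏ l ∈ D, l ≤ z, ∏ l ∈ D, sieveRatio Ω l) ≤ E / 2 :=
    le_of_mul_le_mul_right (by nlinarith) hlogz
  linarith

theorem card_sifted_le (h : IsSieveProblem Ω P) {z : ℕ} (hz : 2 ≤ z)
    (hlog : 2 * ∑ l ∈ P, #(Ω l) * (Real.log l / l) ≤ Real.log z) (N : ℕ) :
    (#(sifted Ω P N) : ℝ) ≤ 2 * (N + (z : ℝ) ^ 6) * ∏ l ∈ P, (1 - (#(Ω l) : ℝ) / l) := by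
  have hE0 : 0 < ∏ l ∈ P, (1 - (#(Ω l) : ℝ) / l) := prod_pos fun l hl => by
    rw [← inv_pos, ← h.one_add_sieveRatio hl]
    linarith [h.sieveRatio_pos hl]
  have hS := h.inv_prod_le_two_mul_sieveSum hz hlog
  have hmul := h.card_sifted_mul_sieveSum_le (z := z) (by lia) N
  rw [← div_le_iff₀ hE0, div_eq_mul_inv]
  nlinarith [Nat.cast_nonneg (α := ℝ) #(sifted Ω P N)]

end IsSieveProblem

end Sieve

section EulerFactors

open Finset

/-- The Euler factor `(1 - 1/l)⁻¹` of the Riemann zeta function at `s = 1`. -/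
noncomputable def eulerFactor (l : ℕ) : ℝ := (1 - (l : ℝ)⁻¹)⁻¹

theorem one_le_eulerFactor {l : ℕ} (hl : 2 ≤ l) : 1 ≤ eulerFactor l := by
  have hl' : (1 : ℝ) < l := by exact_mod_cast hl
  have hlt : (l : ℝ)⁻¹ < 1 := inv_lt_one_of_one_lt₀ hl'
  exact (one_le_inv₀ (by linarith)).2 (by linarith [inv_pos.2 (zero_lt_one.trans hl')])

theorem one_le_prod_eulerFactor {s : Finset ℕ} (hs : ∀ l ∈ s, l.Prime) :
    1 ≤ ∏ l ∈ s, eulerFactor l :=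
  one_le_prod fun l hl => one_le_eulerFactor (hs l hl).two_le

theorem one_le_prod_eulerFactor_primesLE (y : ℕ) : 1 ≤ ∏ p ∈ Nat.primesLE y, eulerFactor p :=
  one_le_prod_eulerFactor fun _ => Nat.prime_of_mem_primesLE

theorem prod_primeFactors_eulerFactor {q : ℕ} (hq : 0 < q) :
    ∏ p ∈ q.primeFactors, eulerFactor p = (q : ℝ) / q.totient := by
  have htotient : (q.totient : ℝ) = q * ∏ p ∈ q.primeFactors, (1 - (p : ℝ)⁻¹) := by
    simpa using congrArg (Rat.cast (K := ℝ)) (Nat.totient_eq_mul_prod_factors q)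
  have hq0 : (q : ℝ) ≠ 0 := by positivity
  simp only [eulerFactor]
  rw [htotient, prod_inv_distrib, div_mul_eq_div_div, div_self hq0, one_div]

theorem prod_primesLE_pow_div_dvd_factorial (n : ℕ) :
    (∏ p ∈ Nat.primesLE n, p ^ (n / p)) ∣ n.factorial := by
  refine prod_dvd_of_isRelPrime (fun p hp p' hp' hne => ?_) fun p hp => ?_
  · rw [Function.onFun, ← Nat.coprime_iff_isRelPrime]
    exact ((Nat.coprime_primes (Nat.prime_of_mem_primesLE hp)
      (Nat.prime_of_mem_primesLE hp')).2 hne).pow _ _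
  · rw [(Nat.prime_of_mem_primesLE hp).pow_dvd_factorial_iff (b := Nat.log p n + 2) (by lia)]
    simpa using single_le_sum (f := fun i => n / p ^ i) (s := Ico 1 (Nat.log p n + 2))
      (fun _ _ => Nat.zero_le _) (mem_Ico.2 ⟨le_rfl, by lia⟩ : 1 ∈ _)

theorem sum_div_mul_log_primesLE_le (n : ℕ) :
    ∑ p ∈ Nat.primesLE n, ((n / p : ℕ) : ℝ) * Real.log p ≤ n * Real.log n := by
  have hpos : 0 < ∏ p ∈ Nat.primesLE n, p ^ (n / p) :=
    prod_pos fun p hp => pow_pos (Nat.prime_of_mem_primesLE hp).pos _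
  have hle : ∏ p ∈ Nat.primesLE n, p ^ (n / p) ≤ n ^ n :=
    (Nat.le_of_dvd n.factorial_pos (prod_primesLE_pow_div_dvd_factorial n)).trans
      (Nat.factorial_le_pow n)
  have hlog : Real.log (∏ p ∈ Nat.primesLE n, p ^ (n / p) : ℕ) ≤ Real.log (n ^ n : ℕ) :=
    Real.log_le_log (by exact_mod_cast hpos) (by exact_mod_cast hle)
  rw [Nat.cast_prod, Real.log_prod fun p hp =>
    Nat.cast_ne_zero.2 (pow_pos (Nat.prime_of_mem_primesLE hp).pos _).ne'] at hlog
  simpa [Real.log_pow] using hlog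

theorem sum_log_div_primesLE_le {n : ℕ} (hn : 1 ≤ n) :
    ∑ p ∈ Nat.primesLE n, Real.log p / p ≤ Real.log n + Real.log 4 := by
  have hn0 : (0 : ℝ) < n := by exact_mod_cast hn
  have htheta : ∑ p ∈ Nat.primesLE n, Real.log p ≤ Real.log 4 * n := by
    rw [← Chebyshev.theta_eq_sum_primesLE_log]
    exact Chebyshev.theta_le_log4_mul_x (by positivity)
  refine le_of_mul_le_mul_right ?_ hn0
  calc (∑ p ∈ Nat.primesLE n, Real.log p / p) * n
      = ∑ p ∈ Nat.primesLE n, (n : ℝ) / p * Real.log p := by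
        rw [sum_mul]
        exact sum_congr rfl fun p _ => by ring
    _ ≤ ∑ p ∈ Nat.primesLE n, (((n / p : ℕ) : ℝ) + 1) * Real.log p := by
        refine sum_le_sum fun p _ => mul_le_mul_of_nonneg_right ?_ (Real.log_natCast_nonneg p)
        exact (Nat.lt_floor_add_one ((n : ℝ) / p)).le.trans_eq (by rw [Nat.floor_div_eq_div])
    _ = ∑ p ∈ Nat.primesLE n, ((n / p : ℕ) : ℝ) * Real.log p +
          ∑ p ∈ Nat.primesLE n, Real.log p := by
        simp only [add_one_mul, sum_add_distrib]
    _ ≤ (Real.log n + Real.log 4) * n := by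
        linarith [sum_div_mul_log_primesLE_le n]

theorem sum_Icc_inv_le_prod_eulerFactor (w : ℕ) :
    ∑ n ∈ Icc 1 w, (n : ℝ)⁻¹ ≤ ∏ p ∈ Nat.primesLE w, eulerFactor p := by
  let f : ℕ →* ℝ := ⟨⟨fun n => (n : ℝ)⁻¹, by simp⟩, fun a b => by simp [mul_comm]⟩
  have hnorm {p : ℕ} (hp : p.Prime) : ‖f p‖ < 1 := by
    simpa [f] using inv_lt_one_of_one_lt₀ (Nat.one_lt_cast.2 hp.one_lt)
  have hsum := (EulerProduct.summable_and_hasSum_smoothNumbers_prod_primesBelow_geometric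
    hnorm (w + 1)).2
  have hsmooth (n : ℕ) (hn : n ∈ Icc 1 w) : n ∈ (w + 1).smoothNumbers := by
    rw [mem_Icc] at hn
    refine Nat.mem_smoothNumbers.2 ⟨by lia, fun p hp => ?_⟩
    exact Nat.lt_succ_of_le ((Nat.le_of_mem_primeFactorsList hp).trans hn.2)
  let e : Finset (w + 1).smoothNumbers := (Icc 1 w).attach.map
    ⟨fun n => ⟨n.1, hsmooth n.1 n.2⟩, fun a b hab => Subtype.ext (by simpa using hab)⟩
  calc ∑ n ∈ Icc 1 w, (n : ℝ)⁻¹ = ∑ n ∈ e, f n := by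
        rw [sum_map]
        exact (sum_attach (Icc 1 w) fun n => (n : ℝ)⁻¹).symm
    _ ≤ ∏ p ∈ (w + 1).primesBelow, (1 - f p)⁻¹ := sum_le_hasSum e (fun n _ => by simp [f]) hsum

theorem log_le_prod_eulerFactor (w : ℕ) :
    Real.log w ≤ ∏ p ∈ Nat.primesLE w, eulerFactor p := by
  refine le_trans ?_ (sum_Icc_inv_le_prod_eulerFactor w)
  rcases Nat.eq_zero_or_pos w with rfl | hw
  · simp
  have hharmonic := log_add_one_le_harmonic w
  rw [harmonic_eq_sum_Icc] at hharmonic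
  push_cast at hharmonic
  exact (Real.log_le_log (by exact_mod_cast hw) (by linarith)).trans hharmonic

theorem eulerFactor_le_two {p : ℕ} (hp : 2 ≤ p) : eulerFactor p ≤ 2 := by
  have hp' : (2 : ℝ) ≤ p := by exact_mod_cast hp
  have hinv : (p : ℝ)⁻¹ ≤ 2⁻¹ := inv_anti₀ two_pos hp'
  exact inv_le_of_inv_le₀ two_pos (by linarith)

theorem eulerFactor_le_exp_log_div {p : ℕ} {δ : ℝ} (hp : 2 ≤ p) (h : 2 ≤ δ * Real.log p) :
    eulerFactor p ≤ Real.exp (δ * (Real.log p / p)) := by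
  have hp' : (2 : ℝ) ≤ p := by exact_mod_cast hp
  have hinv : (p : ℝ)⁻¹ ≤ 2⁻¹ := inv_anti₀ two_pos hp'
  have hpos : 0 < (p : ℝ)⁻¹ := by positivity
  calc eulerFactor p ≤ 2 * (p : ℝ)⁻¹ + 1 := by
        rw [eulerFactor, inv_le_iff_one_le_mul₀ (by linarith)]
        nlinarith
    _ ≤ Real.exp (2 * (p : ℝ)⁻¹) := Real.add_one_le_exp _
    _ ≤ Real.exp (δ * (Real.log p / p)) := by
        rw [div_eq_mul_inv, ← mul_assoc]
        gcongr

theorem exists_prod_eulerFactor_le_rpow {δ : ℝ} (hδ : 0 < δ) : ∃ C : ℝ, 1 ≤ C ∧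
    ∀ y : ℕ, 1 ≤ y → ∏ p ∈ Nat.primesLE y, eulerFactor p ≤ C * (y : ℝ) ^ δ := by
  obtain ⟨T, hT⟩ := exists_nat_gt (Real.exp (2 / δ))
  have hexp1 : 1 ≤ Real.exp (δ * Real.log 4) :=
    Real.one_le_exp (mul_nonneg hδ.le (Real.log_nonneg (by norm_num)))
  refine ⟨2 ^ (T + 1) * Real.exp (δ * Real.log 4),
    one_le_mul_of_one_le_of_one_le (one_le_pow₀ one_le_two) hexp1, fun y hy => ?_⟩
  have hy0 : (0 : ℝ) < y := by exact_mod_cast hy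
  have hterm (p : ℕ) (hp : p ∈ Nat.primesLE y) : eulerFactor p ≤
      (if p ≤ T then 2 else 1) * Real.exp (δ * (Real.log p / p)) := by
    have hp2 := (Nat.prime_of_mem_primesLE hp).two_le
    split_ifs with hpT
    · exact (eulerFactor_le_two hp2).trans (le_mul_of_one_le_right two_pos.le
        (Real.one_le_exp (by positivity)))
    · have hTp : (T : ℝ) ≤ p := by exact_mod_cast (not_le.1 hpT).le
      rw [one_mul]
      refine eulerFactor_le_exp_log_div hp2 ?_
      rw [← div_le_iff₀' hδ]
      exact (Real.le_log_iff_exp_le (by positivity)).2 (hT.le.trans hTp)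
  have hsmall : ∏ p ∈ Nat.primesLE y, (if p ≤ T then (2 : ℝ) else 1) ≤ 2 ^ (T + 1) := by
    rw [← prod_filter, prod_const]
    refine pow_le_pow_right₀ one_le_two ((card_le_card fun p hp => ?_).trans_eq
      (card_range (T + 1)))
    exact mem_range.2 (Nat.lt_succ_of_le (mem_filter.1 hp).2)
  calc ∏ p ∈ Nat.primesLE y, eulerFactor p
      ≤ ∏ p ∈ Nat.primesLE y, ((if p ≤ T then 2 else 1) * Real.exp (δ * (Real.log p / p))) :=
        prod_le_prod (fun p hp => zero_le_one.trans
          (one_le_eulerFactor (Nat.prime_of_mem_primesLE hp).two_le)) hterm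
    _ = (∏ p ∈ Nat.primesLE y, (if p ≤ T then (2 : ℝ) else 1)) *
          Real.exp (δ * ∑ p ∈ Nat.primesLE y, Real.log p / p) := by
        rw [prod_mul_distrib, ← Real.exp_sum, mul_sum]
    _ ≤ 2 ^ (T + 1) * Real.exp (δ * (Real.log y + Real.log 4)) := by
        gcongr
        exact sum_log_div_primesLE_le hy
    _ = 2 ^ (T + 1) * Real.exp (δ * Real.log 4) * (y : ℝ) ^ δ := by
        rw [mul_add, Real.exp_add, Real.rpow_def_of_pos hy0]
        ring_nf

end EulerFactors

section ProductInequalities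

open Finset

variable {ι κ : Type*}

theorem prod_union_le_prod_mul_prod [DecidableEq ι] {s t : Finset ι} {f : ι → ℝ}
    (hf : ∀ i ∈ s ∪ t, 1 ≤ f i) : ∏ i ∈ s ∪ t, f i ≤ (∏ i ∈ s, f i) * ∏ i ∈ t, f i := by
  rw [← prod_union_inter]
  exact le_mul_of_one_le_right (prod_nonneg fun i hi => zero_le_one.trans (hf i hi))
    (one_le_prod fun i hi => hf i (mem_union_left _ (mem_inter.1 hi).1))

theorem prod_biUnion_le_prod_prod [DecidableEq ι] {s : Finset κ} {t : κ → Finset ι} {f : ι → ℝ}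
    (hf : ∀ k ∈ s, ∀ i ∈ t k, 1 ≤ f i) :
    ∏ i ∈ s.biUnion t, f i ≤ ∏ k ∈ s, ∏ i ∈ t k, f i := by
  classical
  induction s using Finset.induction_on with
  | empty => simp
  | insert k s hk ih =>
    have hmem (i : ι) (hi : i ∈ t k ∪ s.biUnion t) : 1 ≤ f i := by
      rw [← biUnion_insert] at hi
      obtain ⟨k', hk', hi⟩ := mem_biUnion.1 hi
      exact hf k' hk' i hi
    rw [biUnion_insert, prod_insert hk]
    refine (prod_union_le_prod_mul_prod hmem).trans (mul_le_mul_of_nonneg_left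
      (ih fun k' hk' => hf k' (mem_insert_of_mem hk')) (prod_nonneg fun i hi => ?_))
    exact zero_le_one.trans (hf k (mem_insert_self _ _) i hi)

theorem prod_le_sum_pow_card {s : Finset ι} (hs : s.Nonempty) {x : ι → ℝ}
    (hx : ∀ i ∈ s, 0 ≤ x i) : ∏ i ∈ s, x i ≤ ∑ i ∈ s, x i ^ #s := by
  obtain ⟨m, hm, hmax⟩ := s.exists_max_image x hs
  calc ∏ i ∈ s, x i ≤ ∏ _i ∈ s, x m := prod_le_prod hx hmax
    _ = x m ^ #s := prod_const _
    _ ≤ ∑ i ∈ s, x i ^ #s :=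
        single_le_sum (f := fun i => x i ^ #s) (fun i hi => pow_nonneg (hx i hi) _) hm

theorem prod_one_add_inv_sqrt_eq_sum {s : Finset ℕ} (hs : ∀ l ∈ s, l.Prime) :
    ∏ l ∈ s, (1 + (√(l : ℝ))⁻¹) =
      ∑ d ∈ s.powerset.image fun D => ∏ l ∈ D, l, (√(d : ℝ))⁻¹ := by
  rw [sum_image, prod_one_add]
  · refine sum_congr rfl fun D _ => ?_
    rw [prod_inv_distrib, Nat.cast_prod, Real.sqrt_prod D fun l _ => Nat.cast_nonneg l]
  · intro D hD D' hD' h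
    have hprimeFactors {E : Finset ℕ} (hE : E ⊆ s) : (∏ l ∈ E, l).primeFactors = E :=
      Nat.primeFactors_prod fun l hl => hs l (hE hl)
    rw [← hprimeFactors (mem_powerset.1 hD), ← hprimeFactors (mem_powerset.1 hD')]
    exact congrArg Nat.primeFactors h

theorem prod_one_add_inv_sqrt_le_sum_divisors {s : Finset ℕ} {q n H : ℕ}
    (hs : ∀ l ∈ s, l.Prime ∧ ¬ l ∣ q ∧ l ∣ n) (hn : 0 < n) (hnH : n ≤ H) :
    ∏ l ∈ s, (1 + (√(l : ℝ))⁻¹) ≤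
      ∑ d ∈ Icc 1 H with d.Coprime q, if d ∣ n then (√(d : ℝ))⁻¹ else 0 := by
  rw [prod_one_add_inv_sqrt_eq_sum fun l hl => (hs l hl).1, ← sum_filter]
  refine sum_le_sum_of_subset_of_nonneg (fun d hd => ?_) fun d _ _ => by positivity
  obtain ⟨D, hD, rfl⟩ := mem_image.1 hd
  have hDs (l : ℕ) (hl : l ∈ D) := hs l (mem_powerset.1 hD hl)
  have hdvd : ∏ l ∈ D, l ∣ n :=
    prod_primes_dvd n (fun l hl => (hDs l hl).1.prime) fun l hl => (hDs l hl).2.2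
  have hcoprime : (∏ l ∈ D, l).Coprime q :=
    Nat.Coprime.prod_left fun l hl => ((hDs l hl).1.coprime_iff_not_dvd).2 (hDs l hl).2.1
  simp only [mem_filter, mem_Icc]
  exact ⟨⟨⟨prod_pos fun l hl => (hDs l hl).1.pos, (Nat.le_of_dvd hn hdvd).trans hnH⟩, hcoprime⟩,
    hdvd⟩

theorem eulerFactor_pow_le_one_add_inv_sqrt {n l : ℕ} (hn : 0 < n) (hl : 4 * n ^ 2 ≤ l) :
    eulerFactor l ^ n ≤ 1 + (√(l : ℝ))⁻¹ := by
  have hn1 : (1 : ℝ) ≤ n := by exact_mod_cast hn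
  have hl' : 4 * (n : ℝ) ^ 2 ≤ l := by exact_mod_cast hl
  have hsqrt : 2 * (n : ℝ) ≤ √l := Real.le_sqrt_of_sq_le (by linarith)
  have hsqrt0 : 0 < √(l : ℝ) := by linarith
  have hinv : (l : ℝ)⁻¹ = (√(l : ℝ))⁻¹ ^ 2 := by rw [inv_pow, Real.sq_sqrt (Nat.cast_nonneg l)]
  rw [eulerFactor, hinv, inv_pow]
  set s := (√(l : ℝ))⁻¹ with hs
  have hs0 : 0 < s := inv_pos.2 hsqrt0
  have hns : 2 * n * s ≤ 1 := by
    rw [hs, ← div_eq_mul_inv]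
    exact div_le_one_of_le₀ hsqrt hsqrt0.le
  have hs2 : s ≤ 1 / 2 := by nlinarith
  have hbernoulli : 1 + n * -s ^ 2 ≤ (1 + -s ^ 2) ^ n := one_add_mul_le_pow (by nlinarith) n
  rw [← sub_eq_add_neg] at hbernoulli
  have hlower : 1 - s / 2 ≤ (1 - s ^ 2) ^ n := by nlinarith
  rw [inv_le_iff_one_le_mul₀ (by linarith)]
  nlinarith

end ProductInequalities

section PrimeTuples

open Finset

variable {k : ℕ}

/-- The `n ≤ X` in the residue class `b` modulo `q` for which all the shifts `n + h i` are primes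
exceeding the sieving limit `w`. -/
def primeTuples (q b w X : ℕ) (h : Fin k → ℕ) : Finset ℕ :=
  {n ∈ range (X + 1) | n % q = b ∧ ∀ i, (n + h i).Prime ∧ w < n + h i}

/-- The classes of `t` modulo `l` for which `l` divides some `b + q t + h i`, for `l` prime to
`q`. -/
def shiftClasses (q b : ℕ) (h : Fin k → ℕ) (l : ℕ) : Finset (ZMod l) :=
  univ.image fun i => -((b : ZMod l) + h i) * (q : ZMod l)⁻¹

/-- The primes at which the shifts `h` are distinct; only primes above `4 k ^ 6` are used. -/
def sievingPrimes (q w : ℕ) (h : Fin k → ℕ) : Finset ℕ :=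
  {l ∈ Nat.primesLE w | 4 * k ^ 6 < l ∧ ¬ l ∣ q ∧ ∀ i j, i < j → ¬ l ∣ h j - h i}

/-- The primes above `4 k ^ 6` at which two of the shifts `h` coincide. -/
def collisionPrimes (q w : ℕ) (h : Fin k → ℕ) : Finset ℕ :=
  {l ∈ Nat.primesLE w | 4 * k ^ 6 < l ∧ ¬ l ∣ q ∧ ∃ i j, i < j ∧ l ∣ h j - h i}

/-- The majorant of the singular series of the tuple `h` given by the divisors of its pairwise
differences. -/
noncomputable def pairDivisorSum (q H : ℕ) (h : Fin k → ℕ) : ℝ :=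
  ∑ p : Fin k × Fin k with p.1 < p.2, ∑ d ∈ Icc 1 H with d.Coprime q,
    if d ∣ h p.2 - h p.1 then (√(d : ℝ))⁻¹ else 0

theorem prime_of_mem_sievingPrimes {q w l : ℕ} {h : Fin k → ℕ} (hl : l ∈ sievingPrimes q w h) :
    l.Prime :=
  Nat.prime_of_mem_primesLE (mem_filter.1 hl).1

theorem prime_of_mem_collisionPrimes {q w l : ℕ} {h : Fin k → ℕ}
    (hl : l ∈ collisionPrimes q w h) : l.Prime :=
  Nat.prime_of_mem_primesLE (mem_filter.1 hl).1

theorem two_mul_le_of_mem_sievingPrimes {q w l : ℕ} {h : Fin k → ℕ}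
    (hl : l ∈ sievingPrimes q w h) : 2 * k ≤ l := by
  have hk : k ≤ k ^ 6 := Nat.le_self_pow (by norm_num) k
  have hlt : 4 * k ^ 6 < l := (mem_filter.1 hl).2.1
  lia

theorem natCast_ne_natCast_of_mem_sievingPrimes {q w l : ℕ} {h : Fin k → ℕ} (hh : StrictMono h)
    (hl : l ∈ sievingPrimes q w h) {i j : Fin k} (hij : i < j) : (h i : ZMod l) ≠ h j := by
  intro heq
  have hdvd := (ZMod.natCast_eq_zero_iff (h j - h i) l).1
    (by rw [Nat.cast_sub (hh hij).le, heq, sub_self])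
  exact (mem_filter.1 hl).2.2.2 i j hij hdvd

theorem natCast_ne_zero_of_mem_sievingPrimes {q w l : ℕ} {h : Fin k → ℕ}
    (hl : l ∈ sievingPrimes q w h) : (q : ZMod l) ≠ 0 := fun h0 =>
  (mem_filter.1 hl).2.2.1 ((ZMod.natCast_eq_zero_iff q l).1 h0)

theorem card_shiftClasses {q b w l : ℕ} {h : Fin k → ℕ} (hh : StrictMono h)
    (hl : l ∈ sievingPrimes q w h) : #(shiftClasses q b h l) = k := by
  have := Fact.mk (prime_of_mem_sievingPrimes hl)
  have hq := natCast_ne_zero_of_mem_sievingPrimes hl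
  rw [shiftClasses, card_image_of_injective, card_univ, Fintype.card_fin]
  intro i j hij
  have hhij : (h i : ZMod l) = h j :=
    add_left_cancel (neg_injective (mul_right_cancel₀ (inv_ne_zero hq) hij))
  rcases lt_trichotomy i j with hlt | heq | hlt
  · exact absurd hhij (natCast_ne_natCast_of_mem_sievingPrimes hh hl hlt)
  · exact heq
  · exact absurd hhij.symm (natCast_ne_natCast_of_mem_sievingPrimes hh hl hlt)

theorem dvd_of_natCast_mem_shiftClasses {q b w l t : ℕ} {h : Fin k → ℕ}
    (hl : l ∈ sievingPrimes q w h) (ht : (t : ZMod l) ∈ shiftClasses q b h l) :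
    ∃ i, l ∣ b + q * t + h i := by
  have := Fact.mk (prime_of_mem_sievingPrimes hl)
  have hq := natCast_ne_zero_of_mem_sievingPrimes hl
  obtain ⟨i, -, hi⟩ := mem_image.1 ht
  refine ⟨i, (ZMod.natCast_eq_zero_iff _ l).1 ?_⟩
  push_cast
  rw [← hi]
  field_simp
  ring

theorem isSieveProblem_shiftClasses (hk : 0 < k) (q b w : ℕ) {h : Fin k → ℕ} (hh : StrictMono h) :
    IsSieveProblem (shiftClasses q b h) (sievingPrimes q w h) where
  prime l hl := prime_of_mem_sievingPrimes hl
  nonempty l hl := card_pos.1 (by rwa [card_shiftClasses hh hl])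
  two_mul_card_le l hl := by
    rw [card_shiftClasses hh hl]
    exact two_mul_le_of_mem_sievingPrimes hl

theorem card_primeTuples_le_card_sifted (q b w X : ℕ) (h : Fin k → ℕ) :
    #(primeTuples q b w X h) ≤
      #(sifted (shiftClasses q b h) (sievingPrimes q w h) (X / q + 1)) := by
  refine card_le_card_of_injOn (fun n => n / q) (fun n hn => ?_) fun m hm n hn hmn => ?_
  · obtain ⟨hnX, hnb, hprime⟩ := mem_filter.1 hn
    refine mem_filter.2 ⟨mem_range.2 (Nat.lt_succ_of_le (Nat.div_le_div_right
      (Nat.lt_succ_iff.1 (mem_range.1 hnX)))), fun l hl hmem => ?_⟩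
    obtain ⟨i, hi⟩ := dvd_of_natCast_mem_shiftClasses hl hmem
    rw [← hnb, Nat.mod_add_div] at hi
    have hl_eq := (Nat.prime_dvd_prime_iff_eq (prime_of_mem_sievingPrimes hl) (hprime i).1).1 hi
    have hlw := (Nat.mem_primesLE.1 (mem_filter.1 hl).1).1
    exact absurd (hprime i).2 (by lia)
  · have hmb := (mem_filter.1 hm).2.1
    have hnb := (mem_filter.1 hn).2.1
    rw [← Nat.mod_add_div m q, ← Nat.mod_add_div n q, hmb, hnb]
    exact congrArg (b + q * ·) hmn

theorem card_primeTuples_le_prod (hk : 0 < k) (q b X : ℕ) {h : Fin k → ℕ} (hh : StrictMono h)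
    {w z : ℕ} (hw : 1 ≤ w) (hz : 2 ≤ z)
    (hlog : 2 * k * (Real.log w + Real.log 4) ≤ Real.log z) :
    (#(primeTuples q b w X h) : ℝ) ≤ 2 * ((X / q : ℕ) + 1 + (z : ℝ) ^ 6) *
      ∏ l ∈ sievingPrimes q w h, (1 - (k : ℝ) / l) := by
  have hcard (l : ℕ) (hl : l ∈ sievingPrimes q w h) : (#(shiftClasses q b h l) : ℝ) = k := by
    rw [card_shiftClasses hh hl]
  have hsum : ∑ l ∈ sievingPrimes q w h, Real.log l / l ≤ Real.log w + Real.log 4 :=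
    (sum_le_sum_of_subset_of_nonneg (filter_subset _ _) fun l _ _ => by positivity).trans
      (sum_log_div_primesLE_le hw)
  have hlevel : 2 * ∑ l ∈ sievingPrimes q w h, #(shiftClasses q b h l) * (Real.log l / l) ≤
      Real.log z := by
    rw [sum_congr rfl fun l hl => by rw [hcard l hl], ← mul_sum, ← mul_assoc]
    exact (mul_le_mul_of_nonneg_left hsum (by positivity)).trans hlog
  have hsieve := (isSieveProblem_shiftClasses hk q b w hh).card_sifted_le hz hlevel (X / q + 1)
  rw [prod_congr rfl fun l hl => by rw [hcard l hl], Nat.cast_add_one] at hsieve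
  exact (Nat.cast_le.2 (card_primeTuples_le_card_sifted q b w X h)).trans hsieve

theorem prod_collisionPrimes_pow_le_pairDivisorSum (hk : 2 ≤ k) (q w : ℕ) {h : Fin k → ℕ}
    (hh : StrictMono h) {H : ℕ} (hH : ∀ i j, i < j → h j - h i ≤ H) :
    ∏ l ∈ collisionPrimes q w h, eulerFactor l ^ k ≤ pairDivisorSum q H h := by
  set pairs : Finset (Fin k × Fin k) := {p | p.1 < p.2}
  let collisions (p : Fin k × Fin k) : Finset ℕ :=
    {l ∈ Nat.primesLE w | 4 * k ^ 6 < l ∧ ¬ l ∣ q ∧ l ∣ h p.2 - h p.1}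
  have hprime {p : Fin k × Fin k} {l : ℕ} (hl : l ∈ collisions p) : l.Prime :=
    Nat.prime_of_mem_primesLE (mem_filter.1 hl).1
  have hone {p : Fin k × Fin k} {l : ℕ} (hl : l ∈ collisions p) (n : ℕ) : 1 ≤ eulerFactor l ^ n :=
    one_le_pow₀ (one_le_eulerFactor (hprime hl).two_le)
  have hunion : collisionPrimes q w h = pairs.biUnion collisions := by
    ext l
    simp only [collisionPrimes, pairs, collisions, mem_filter, mem_biUnion, mem_univ, true_and,
      Prod.exists]
    tauto
  have hpairs : pairs.Nonempty := ⟨(⟨0, by lia⟩, ⟨1, by lia⟩), by simp [pairs]⟩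
  have hexponent : k * #pairs ≤ k ^ 3 := by
    have hcard : #pairs ≤ k * k := by simpa using card_le_univ pairs
    nlinarith
  have hterm {p : Fin k × Fin k} {l : ℕ} (hl : l ∈ collisions p) :
      (eulerFactor l ^ k) ^ #pairs ≤ 1 + (√(l : ℝ))⁻¹ := by
    rw [← pow_mul]
    refine (pow_le_pow_right₀ (one_le_eulerFactor (hprime hl).two_le) hexponent).trans
      (eulerFactor_pow_le_one_add_inv_sqrt (by positivity) ?_)
    rw [← pow_mul]
    exact (mem_filter.1 hl).2.1.le
  rw [hunion]
  refine (prod_biUnion_le_prod_prod fun p _ l hl => hone hl k).trans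
    ((prod_le_sum_pow_card hpairs fun p _ => prod_nonneg fun l hl =>
      zero_le_one.trans (hone hl k)).trans (sum_le_sum fun p hp => ?_))
  have hlt : p.1 < p.2 := (mem_filter.1 hp).2
  rw [← prod_pow]
  refine (prod_le_prod (fun l hl => pow_nonneg (zero_le_one.trans (hone hl k)) _)
    fun l hl => hterm hl).trans ?_
  exact prod_one_add_inv_sqrt_le_sum_divisors
    (fun l hl => ⟨hprime hl, (mem_filter.1 hl).2.2⟩) (Nat.sub_pos_of_lt (hh hlt)) (hH _ _ hlt)

theorem primesLE_subset_sievingPrimes_union {q : ℕ} (hq : 0 < q) (w : ℕ) (h : Fin k → ℕ) :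
    Nat.primesLE w ⊆ sievingPrimes q w h ∪
      (collisionPrimes q w h ∪ (Nat.primesLE (4 * k ^ 6) ∪ q.primeFactors)) := by
  intro l hl
  have hprime := Nat.prime_of_mem_primesLE hl
  simp only [mem_union, sievingPrimes, collisionPrimes, mem_filter, Nat.mem_primesLE,
    Nat.mem_primeFactors, hl, hprime, hq.ne', ne_eq, not_false_eq_true, true_and, and_true]
  by_cases hlarge : 4 * k ^ 6 < l
  · by_cases hdvd : l ∣ q
    · exact Or.inr (Or.inr (Or.inr hdvd))
    by_cases hcollision : ∃ i j, i < j ∧ l ∣ h j - h i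
    · exact Or.inr (Or.inl ⟨hlarge, hdvd, hcollision⟩)
    · push Not at hcollision
      exact Or.inl ⟨hlarge, hdvd, hcollision⟩
  · exact Or.inr (Or.inr (Or.inl (not_lt.1 hlarge)))

theorem log_le_prod_sievingPrimes_mul {q : ℕ} (hq : 0 < q) (w : ℕ) (h : Fin k → ℕ) :
    Real.log w ≤ (∏ l ∈ sievingPrimes q w h, eulerFactor l) *
      ((∏ l ∈ collisionPrimes q w h, eulerFactor l) *
        ((∏ l ∈ Nat.primesLE (4 * k ^ 6), eulerFactor l) * ((q : ℝ) / q.totient))) := by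
  set P := sievingPrimes q w h
  set B := collisionPrimes q w h
  set Y := Nat.primesLE (4 * k ^ 6)
  have hone (l : ℕ) (hl : l ∈ P ∪ (B ∪ (Y ∪ q.primeFactors))) : 1 ≤ eulerFactor l := by
    refine one_le_eulerFactor (Nat.Prime.two_le ?_)
    simp only [mem_union] at hl
    rcases hl with hl | hl | hl | hl
    exacts [prime_of_mem_sievingPrimes hl, prime_of_mem_collisionPrimes hl,
      Nat.prime_of_mem_primesLE hl, Nat.prime_of_mem_primeFactors hl]
  have hP := one_le_prod_eulerFactor fun l (hl : l ∈ P) => prime_of_mem_sievingPrimes hl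
  have hB := one_le_prod_eulerFactor fun l (hl : l ∈ B) => prime_of_mem_collisionPrimes hl
  refine (log_le_prod_eulerFactor w).trans ?_
  refine (prod_le_prod_of_subset_of_one_le (primesLE_subset_sievingPrimes_union hq w h)
    (fun l hl => zero_le_one.trans (one_le_eulerFactor (Nat.prime_of_mem_primesLE hl).two_le))
    fun l hl _ => hone l hl).trans ?_
  refine (prod_union_le_prod_mul_prod hone).trans (mul_le_mul_of_nonneg_left ?_ (by linarith))
  refine (prod_union_le_prod_mul_prod fun l hl => hone l (mem_union_right _ hl)).trans
    (mul_le_mul_of_nonneg_left ?_ (by linarith))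
  rw [← prod_primeFactors_eulerFactor hq]
  exact prod_union_le_prod_mul_prod fun l hl => hone l (mem_union_right _ (mem_union_right _ hl))

theorem prod_one_sub_div_le_inv_prod_eulerFactor_pow (q w : ℕ) (h : Fin k → ℕ) :
    ∏ l ∈ sievingPrimes q w h, (1 - (k : ℝ) / l) ≤
      (∏ l ∈ sievingPrimes q w h, eulerFactor l)⁻¹ ^ k := by
  rw [← prod_inv_distrib, ← prod_pow]
  refine prod_le_prod (fun l hl => ?_) fun l _ => ?_
  · have hkl : 2 * (k : ℝ) ≤ l := by exact_mod_cast two_mul_le_of_mem_sievingPrimes hl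
    exact sub_nonneg.2 (div_le_one_of_le₀ (by linarith [Nat.cast_nonneg (α := ℝ) k])
      (Nat.cast_nonneg l))
  · have hinv : (l : ℝ)⁻¹ ≤ 1 := Nat.cast_inv_le_one l
    have hbernoulli : 1 + k * -(l : ℝ)⁻¹ ≤ (1 + -(l : ℝ)⁻¹) ^ k :=
      one_add_mul_le_pow (by linarith) k
    rw [eulerFactor, inv_inv, div_eq_mul_inv]
    linarith [hbernoulli, show (1 + -(l : ℝ)⁻¹) ^ k = (1 - (l : ℝ)⁻¹) ^ k from rfl]

theorem card_primeTuples_le (hk : 2 ≤ k) {q : ℕ} (hq : 0 < q) (b X : ℕ) {h : Fin k → ℕ}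
    (hh : StrictMono h) {H : ℕ} (hH : ∀ i j, i < j → h j - h i ≤ H) {w z : ℕ} (hw : 2 ≤ w)
    (hz : 2 ≤ z) (hlog : 2 * k * (Real.log w + Real.log 4) ≤ Real.log z) {M : ℝ}
    (hM : ∏ p ∈ Nat.primesLE (4 * k ^ 6), eulerFactor p ≤ M) :
    (#(primeTuples q b w X h) : ℝ) ≤ 2 * ((X / q : ℕ) + 1 + (z : ℝ) ^ 6) *
      ((M * ((q : ℝ) / q.totient) / Real.log w) ^ k * pairDivisorSum q H h) := by
  set E := ∏ l ∈ sievingPrimes q w h, eulerFactor l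
  set B := ∏ l ∈ collisionPrimes q w h, eulerFactor l
  have hE : 1 ≤ E := one_le_prod_eulerFactor fun l hl => prime_of_mem_sievingPrimes hl
  have hB : 1 ≤ B := one_le_prod_eulerFactor fun l hl => prime_of_mem_collisionPrimes hl
  have hM0 : 0 ≤ M := zero_le_one.trans ((one_le_prod_eulerFactor_primesLE _).trans hM)
  have hlogw : 0 < Real.log w := Real.log_pos (by exact_mod_cast hw)
  have hchain : Real.log w ≤ E * (B * (M * ((q : ℝ) / q.totient))) :=
    (log_le_prod_sievingPrimes_mul hq w h).trans (by gcongr)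
  have hEinv : E⁻¹ ≤ M * ((q : ℝ) / q.totient) / Real.log w * B := by
    rw [inv_le_iff_one_le_mul₀ (by linarith), div_mul_eq_mul_div, div_mul_eq_mul_div,
      one_le_div hlogw]
    linarith
  refine (card_primeTuples_le_prod (by lia) q b X hh (by lia) hz hlog).trans ?_
  refine mul_le_mul_of_nonneg_left ?_ (by positivity)
  calc ∏ l ∈ sievingPrimes q w h, (1 - (k : ℝ) / l) ≤ E⁻¹ ^ k :=
        prod_one_sub_div_le_inv_prod_eulerFactor_pow q w h
    _ ≤ (M * ((q : ℝ) / q.totient) / Real.log w * B) ^ k := by gcongr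
    _ = (M * ((q : ℝ) / q.totient) / Real.log w) ^ k *
          ∏ l ∈ collisionPrimes q w h, eulerFactor l ^ k := by rw [mul_pow, prod_pow]
    _ ≤ (M * ((q : ℝ) / q.totient) / Real.log w) ^ k * pairDivisorSum q H h := by
        gcongr
        exact prod_collisionPrimes_pow_le_pairDivisorSum hk q w hh hH

end PrimeTuples

section GapWeights

open Finset

theorem inv_one_sub_exp_neg_le {x : ℝ} (hx : 0 < x) : (1 - Real.exp (-x))⁻¹ ≤ 1 + x⁻¹ := by
  have hle : Real.exp (-x) ≤ (x + 1)⁻¹ := by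
    rw [Real.exp_neg]
    exact inv_anti₀ (by positivity) (Real.add_one_le_exp x)
  calc (1 - Real.exp (-x))⁻¹ ≤ (1 - (x + 1)⁻¹)⁻¹ := by
        gcongr
        exact sub_pos.2 (inv_lt_one_of_one_lt₀ (by linarith))
    _ = 1 + x⁻¹ := by
        field_simp
        rw [add_sub_cancel_right, div_self hx.ne']

theorem sum_exp_neg_div_le_of_modEq {T : ℝ} (hT : 0 < T) {N : ℕ} (hN : 0 < N) {S : Finset ℕ}
    (hS : ∀ v ∈ S, ∀ u ∈ S, v ≡ u [MOD N]) :
    ∑ v ∈ S, Real.exp (-(v : ℝ) / T) ≤ 1 + T / N := by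
  have hNT : 0 < (N : ℝ) / T := by positivity
  set x : ℝ := Real.exp (-((N : ℝ) / T)) with hx
  have hx1 : x < 1 := Real.exp_lt_one_iff.2 (by linarith)
  have hquot : Set.InjOn (· / N) (S : Set ℕ) := fun v hv u hu (hdiv : v / N = u / N) => by
    rw [← Nat.div_add_mod v N, ← Nat.div_add_mod u N, hdiv, hS v hv u hu]
  calc ∑ v ∈ S, Real.exp (-(v : ℝ) / T) ≤ ∑ v ∈ S, x ^ (v / N) := by
        refine sum_le_sum fun v _ => ?_
        rw [hx, ← Real.exp_nat_mul, Real.exp_le_exp, neg_div, mul_neg, neg_le_neg_iff,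
          ← mul_div_assoc]
        gcongr
        exact_mod_cast Nat.div_mul_le_self v N
    _ = ∑ t ∈ S.image (· / N), x ^ t := (sum_image hquot).symm
    _ ≤ (1 - x)⁻¹ := by
        rw [← tsum_geometric_of_lt_one (Real.exp_nonneg _) hx1]
        exact (summable_geometric_of_lt_one (Real.exp_nonneg _) hx1).sum_le_tsum _
          fun _ _ => by positivity
    _ ≤ 1 + T / N := (inv_one_sub_exp_neg_le hNT).trans_eq (by rw [inv_div])

/-- The exponential weight with scale `T` on the natural numbers in the residue class `a`. It
bounds the number of gap vectors of bounded total length by a product over the gaps. -/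
noncomputable def gapWeight (q : ℕ) (T : ℝ) (a : ZMod q) (v : ℕ) : ℝ :=
  if (v : ZMod q) = a then Real.exp (-(v : ℝ) / T) else 0

theorem gapWeight_nonneg (q : ℕ) (T : ℝ) (a : ZMod q) (v : ℕ) : 0 ≤ gapWeight q T a v := by
  unfold gapWeight
  positivity

theorem sum_gapWeight_le {q : ℕ} (hq : 0 < q) {T : ℝ} (hT : 0 < T) (a : ZMod q) (n : ℕ) :
    ∑ v : Fin n, gapWeight q T a v ≤ 1 + T / q := by
  rw [Fin.sum_univ_eq_sum_range (gapWeight q T a)]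
  unfold gapWeight
  rw [← sum_filter]
  refine sum_exp_neg_div_le_of_modEq hT hq fun v hv u hu => ?_
  rw [← ZMod.natCast_eq_natCast_iff, (mem_filter.1 hv).2, (mem_filter.1 hu).2]

theorem sum_gapWeight_dvd_add_le {q : ℕ} (hq : 0 < q) {T : ℝ} (hT : 0 < T) (a : ZMod q) (n : ℕ)
    {d : ℕ} (hd : 0 < d) (hdq : d.Coprime q) (s : ℕ) :
    ∑ v : Fin n, gapWeight q T a v * (if d ∣ v + s then 1 else 0) ≤ 1 + T / (d * q) := by
  rw [Fin.sum_univ_eq_sum_range fun v => gapWeight q T a v * (if d ∣ v + s then 1 else 0)]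
  unfold gapWeight
  simp_rw [mul_ite, mul_one, mul_zero, ← ite_and]
  rw [← sum_filter, ← Nat.cast_mul]
  refine sum_exp_neg_div_le_of_modEq hT (by positivity) fun v hv u hu => ?_
  obtain ⟨-, hdv, hav⟩ := mem_filter.1 hv
  obtain ⟨-, hdu, hau⟩ := mem_filter.1 hu
  refine (Nat.modEq_and_modEq_iff_modEq_mul hdq).1 ⟨Nat.ModEq.add_right_cancel' s ?_, ?_⟩
  · exact (Nat.modEq_zero_iff_dvd.2 hdv).trans (Nat.modEq_zero_iff_dvd.2 hdu).symm
  · rw [← ZMod.natCast_eq_natCast_iff, hav, hau]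

theorem sum_prod_mul_le_of_sum_insertNth_le {α : Type*} [Fintype α] {n : ℕ}
    {W : Fin (n + 1) → α → ℝ} (hW : ∀ i v, 0 ≤ W i v) {S : ℝ} (hS : ∀ i, ∑ v, W i v ≤ S)
    {F : (Fin (n + 1) → α) → ℝ} {C : ℝ} (hC : 0 ≤ C) (i : Fin (n + 1))
    (hF : ∀ g : Fin n → α, ∑ v, W i v * F (i.insertNth v g) ≤ C) :
    ∑ g, (∏ j, W j (g j)) * F g ≤ C * S ^ n := by
  rw [← (Fin.insertNthEquiv (fun _ => α) i).sum_comp, Fintype.sum_prod_type, sum_comm]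
  simp only [Fin.insertNthEquiv_apply, Fin.prod_univ_succAbove _ i, Fin.insertNth_apply_same,
    Fin.insertNth_apply_succAbove]
  calc ∑ g : Fin n → α, ∑ v, (W i v * ∏ j, W (i.succAbove j) (g j)) * F (i.insertNth v g)
      = ∑ g : Fin n → α, (∏ j, W (i.succAbove j) (g j)) *
          ∑ v, W i v * F (i.insertNth v g) := by
        simp only [mul_sum]
        exact sum_congr rfl fun g _ => sum_congr rfl fun v _ => by ring
    _ ≤ ∑ g : Fin n → α, (∏ j, W (i.succAbove j) (g j)) * C :=
        sum_le_sum fun g _ => mul_le_mul_of_nonneg_left (hF g) (prod_nonneg fun j _ => hW _ _)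
    _ = C * ∏ j : Fin n, ∑ v, W (i.succAbove j) v := by
        rw [← sum_mul, prod_univ_sum, Fintype.piFinset_univ, mul_comm]
    _ ≤ C * ∏ _j : Fin n, S := by
        refine mul_le_mul_of_nonneg_left (prod_le_prod (fun j _ => ?_) fun j _ => hS _) hC
        exact sum_nonneg fun v _ => hW _ v
    _ = C * S ^ n := by simp

theorem partialSum_eq_sum {M : Type*} [AddCommMonoid M] {n : ℕ} (g : Fin n → M) (j : Fin (n + 1)) :
    Fin.partialSum g j = ∑ t, if t.castSucc < j then g t else 0 := by
  induction j using Fin.induction with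
  | zero => simp
  | succ j ih =>
    rw [Fin.partialSum_succ, ih, ← Fintype.sum_ite_eq j g, ← sum_add_distrib]
    refine sum_congr rfl fun t _ => ?_
    rcases lt_trichotomy t j with hlt | rfl | hgt
    · simp [hlt, hlt.le, hlt.ne']
    · simp
    · simp [hgt.not_gt, hgt.not_ge, hgt.ne]

theorem partialSum_eq_add_sum {M : Type*} [AddCommMonoid M] {n : ℕ} (g : Fin n → M)
    {i j : Fin (n + 1)} (hij : i ≤ j) :
    Fin.partialSum g j =
      Fin.partialSum g i + ∑ t, if i ≤ t.castSucc ∧ t.castSucc < j then g t else 0 := by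
  rw [partialSum_eq_sum, partialSum_eq_sum, ← sum_add_distrib]
  refine sum_congr rfl fun t _ => ?_
  rcases lt_or_ge t.castSucc i with hlt | hge
  · simp [hlt, hlt.trans_le hij, hlt.not_ge]
  · simp [hge, hge.not_gt]

theorem partialSum_last {M : Type*} [AddCommMonoid M] {n : ℕ} (g : Fin n → M) :
    Fin.partialSum g (Fin.last n) = ∑ t, g t := by
  simp [partialSum_eq_sum, Fin.castSucc_lt_last]

theorem sum_prod_gapWeight_dvd_partialSum_sub_le {q : ℕ} (hq : 0 < q) {T : ℝ} (hT : 0 < T) {r : ℕ}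
    (a : Fin (r + 1) → ZMod q) (n : ℕ) {d : ℕ} (hd : 0 < d) (hdq : d.Coprime q)
    {i j : Fin (r + 2)} (hij : i < j) :
    ∑ g : Fin (r + 1) → Fin n, (∏ t, gapWeight q T (a t) (g t)) *
      (if d ∣ Fin.partialSum (fun t => (g t : ℕ)) j - Fin.partialSum (fun t => (g t : ℕ)) i
        then 1 else 0) ≤ (1 + T / (d * q)) * (1 + T / q) ^ r := by
  have hlast : i ≠ Fin.last (r + 1) := (hij.trans_le (Fin.le_last j)).ne
  refine sum_prod_mul_le_of_sum_insertNth_le (W := fun t (v : Fin n) => gapWeight q T (a t) v)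
    (fun t v => gapWeight_nonneg q T (a t) v)
    (fun t => sum_gapWeight_le hq hT (a t) n) (by positivity) (i.castPred hlast) fun g => ?_
  simp only [partialSum_eq_add_sum _ hij.le, Nat.add_sub_cancel_left,
    Fin.sum_univ_succAbove _ (i.castPred hlast), Fin.insertNth_apply_same,
    Fin.insertNth_apply_succAbove, Fin.castSucc_castPred, le_refl, hij, and_self, if_true]
  exact sum_gapWeight_dvd_add_le hq hT _ n hd hdq _

theorem sum_inv_sqrt_le (H : ℕ) : ∑ d ∈ Icc 1 H, (√(d : ℝ))⁻¹ ≤ 2 * √(H : ℝ) := by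
  induction H with
  | zero => simp
  | succ n ih =>
    rw [sum_Icc_succ_top (by lia)]
    have hpos : 0 < √((n + 1 : ℕ) : ℝ) := by positivity
    have hsq : √((n + 1 : ℕ) : ℝ) ^ 2 = √(n : ℝ) ^ 2 + 1 := by
      rw [Real.sq_sqrt (by positivity), Real.sq_sqrt (by positivity)]
      push_cast
      ring
    have hstep : (√((n + 1 : ℕ) : ℝ))⁻¹ ≤ 2 * √((n + 1 : ℕ) : ℝ) - 2 * √(n : ℝ) := by
      rw [inv_le_iff_one_le_mul₀ hpos]
      nlinarith [sq_nonneg (√((n + 1 : ℕ) : ℝ) - √(n : ℝ))]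
    linarith

theorem inv_sqrt_div_succ_le {n : ℕ} (hn : 0 < n) :
    (√((n + 1 : ℕ) : ℝ))⁻¹ / (n + 1 : ℕ) ≤ 2 * (√(n : ℝ))⁻¹ - 2 * (√((n + 1 : ℕ) : ℝ))⁻¹ := by
  set a := √((n + 1 : ℕ) : ℝ)
  set b := √(n : ℝ)
  have hb : 0 < b := by positivity
  have hn' : ((n + 1 : ℕ) : ℝ) = a ^ 2 := (Real.sq_sqrt (by positivity)).symm
  have hsq : a ^ 2 = b ^ 2 + 1 := by
    rw [← hn', Real.sq_sqrt (by positivity)]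
    push_cast
    ring
  have hab : b ≤ a := Real.sqrt_le_sqrt (by push_cast; linarith)
  have ha0 : 0 < a := hb.trans_le hab
  have hdiff : 1 ≤ (a - b) * (2 * a) := by nlinarith [sq_nonneg (a - b)]
  have hident : 2 * b⁻¹ - 2 * a⁻¹ - a⁻¹ / a ^ 2 = (2 * a ^ 2 * (a - b) - b) / (a ^ 3 * b) := by
    field_simp
  have hnonneg : 0 ≤ (2 * a ^ 2 * (a - b) - b) / (a ^ 3 * b) :=
    div_nonneg (by nlinarith) (by positivity)
  rw [hn']
  linarith

theorem sum_inv_sqrt_div_le (H : ℕ) : ∑ d ∈ Icc 1 H, (√(d : ℝ))⁻¹ / d ≤ 3 := by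
  have htelescope (n : ℕ) :
      ∑ d ∈ Icc 1 (n + 1), (√(d : ℝ))⁻¹ / d ≤ 3 - 2 * (√((n + 1 : ℕ) : ℝ))⁻¹ := by
    induction n with
    | zero => norm_num
    | succ n ih =>
      rw [sum_Icc_succ_top (by lia)]
      linarith [inv_sqrt_div_succ_le n.succ_pos]
  cases H with
  | zero => simp
  | succ n => exact (htelescope n).trans (sub_le_self _ (by positivity))

theorem sum_coprime_inv_sqrt_mul_le (H q : ℕ) {T : ℝ} (hT : 0 ≤ T) :
    ∑ d ∈ Icc 1 H with d.Coprime q, (√(d : ℝ))⁻¹ * (1 + T / (d * q)) ≤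
      2 * √(H : ℝ) + 3 * (T / q) := by
  calc ∑ d ∈ Icc 1 H with d.Coprime q, (√(d : ℝ))⁻¹ * (1 + T / (d * q))
      ≤ ∑ d ∈ Icc 1 H, (√(d : ℝ))⁻¹ * (1 + T / (d * q)) :=
        sum_le_sum_of_subset_of_nonneg (filter_subset _ _) fun _ _ _ => by positivity
    _ = ∑ d ∈ Icc 1 H, (√(d : ℝ))⁻¹ + (∑ d ∈ Icc 1 H, (√(d : ℝ))⁻¹ / d) * (T / q) := by
        rw [sum_mul, ← sum_add_distrib]
        exact sum_congr rfl fun d _ => by ring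
    _ ≤ 2 * √(H : ℝ) + 3 * (T / q) := by
        gcongr
        exacts [sum_inv_sqrt_le H, sum_inv_sqrt_div_le H]

theorem sum_prod_gapWeight_mul_pairDivisorSum_le {q : ℕ} (hq : 0 < q) {T : ℝ} (hT : 0 < T) {r : ℕ}
    (a : Fin (r + 1) → ZMod q) (H n : ℕ) :
    ∑ g : Fin (r + 1) → Fin n, (∏ t, gapWeight q T (a t) (g t)) *
        pairDivisorSum q H (Fin.partialSum fun t => (g t : ℕ)) ≤
      (r + 2) ^ 2 * ((1 + T / q) ^ r * (2 * √(H : ℝ) + 3 * (T / q))) := by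
  set pairs : Finset (Fin (r + 2) × Fin (r + 2)) := {p | p.1 < p.2}
  have hpairs : (#pairs : ℝ) ≤ (r + 2) ^ 2 := by
    have hcard : #pairs ≤ (r + 2) ^ 2 := by simpa [pow_two] using card_le_univ pairs
    exact_mod_cast hcard
  calc _ = ∑ p ∈ pairs, ∑ d ∈ Icc 1 H with d.Coprime q, (√(d : ℝ))⁻¹ *
          ∑ g : Fin (r + 1) → Fin n, (∏ t, gapWeight q T (a t) (g t)) *
            (if d ∣ Fin.partialSum (fun t => (g t : ℕ)) p.2 -
              Fin.partialSum (fun t => (g t : ℕ)) p.1 then 1 else 0) := by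
        simp only [pairDivisorSum, mul_sum]
        rw [sum_comm]
        refine sum_congr rfl fun p _ => ?_
        rw [sum_comm]
        refine sum_congr rfl fun d _ => sum_congr rfl fun g _ => ?_
        split_ifs <;> ring
    _ ≤ ∑ p ∈ pairs, ∑ d ∈ Icc 1 H with d.Coprime q,
          (√(d : ℝ))⁻¹ * ((1 + T / (d * q)) * (1 + T / q) ^ r) := by
        refine sum_le_sum fun p hp => sum_le_sum fun d hd =>
          mul_le_mul_of_nonneg_left ?_ (by positivity)
        obtain ⟨hd, hdq⟩ := mem_filter.1 hd
        exact sum_prod_gapWeight_dvd_partialSum_sub_le hq hT a n (mem_Icc.1 hd).1 hdq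
          (mem_filter.1 hp).2
    _ = #pairs * ((1 + T / q) ^ r *
          ∑ d ∈ Icc 1 H with d.Coprime q, (√(d : ℝ))⁻¹ * (1 + T / (d * q))) := by
        rw [sum_const, nsmul_eq_mul, mul_sum (a := (1 + T / q) ^ r)]
        exact congrArg _ (sum_congr rfl fun d _ => by ring)
    _ ≤ (r + 2) ^ 2 * ((1 + T / q) ^ r * (2 * √(H : ℝ) + 3 * (T / q))) := by
        gcongr
        exact sum_coprime_inv_sqrt_mul_le H q hT.le

end GapWeights

local notation "nthPrime" => Nat.nth Nat.Prime

section PrimeClusters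

open Finset

/-- The indices `n` for which the `s + 1` consecutive primes starting with the `n`-th one lie in
`(w, X]` and span at most `H`. -/
noncomputable def primeClusters (s H w X : ℕ) : Finset ℕ :=
  {n ∈ range (X + 1) | nthPrime (n + s) ≤ X ∧ w < nthPrime n ∧ nthPrime (n + s) - nthPrime n ≤ H}

theorem strictMono_nthPrime : StrictMono nthPrime :=
  Nat.nth_strictMono Nat.infinite_setOfPred_prime

theorem nthPrime_le_of_lt_primeCounting {n X : ℕ} (hn : n < Nat.primeCounting X) :
    nthPrime n ≤ X :=
  Nat.lt_succ_iff.1 (Nat.nth_lt_of_lt_count hn)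

theorem sum_range_shift_sub_le {f : ℕ → ℝ} (hf : ∀ n, 0 ≤ f n) {s N : ℕ} {B : ℝ}
    (hB : ∀ n < N + s, f n ≤ B) : ∑ n ∈ range N, (f (n + s) - f n) ≤ s * B := by
  have hhead : 0 ≤ ∑ n ∈ range s, f n := sum_nonneg fun n _ => hf n
  have htail : ∑ n ∈ range s, f (N + n) ≤ s * B := by
    simpa using sum_le_sum fun n (hn : n ∈ range s) =>
      hB (N + n) (Nat.add_lt_add_left (mem_range.1 hn) N)
  have hsplit := sum_range_add f N s
  rw [add_comm N s, sum_range_add f s N] at hsplit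
  simp only [sum_sub_distrib, add_comm _ s]
  linarith

theorem card_long_gaps_le {s N X : ℕ} (hN : N + s ≤ Nat.primeCounting X) (H : ℕ) :
    (#{n ∈ range N | H < nthPrime (n + s) - nthPrime n} : ℝ) ≤ s * X / (H + 1) := by
  rw [le_div_iff₀ (by positivity)]
  calc (#{n ∈ range N | H < nthPrime (n + s) - nthPrime n} : ℝ) * (H + 1)
      = ∑ n ∈ range N with H < nthPrime (n + s) - nthPrime n, ((H : ℝ) + 1) := by
        rw [sum_const, nsmul_eq_mul]
    _ ≤ ∑ n ∈ range N with H < nthPrime (n + s) - nthPrime n,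
          ((nthPrime (n + s) : ℝ) - nthPrime n) := by
        refine sum_le_sum fun n hn => ?_
        have hgap : H < nthPrime (n + s) - nthPrime n := (mem_filter.1 hn).2
        have hgap' : H + 1 + nthPrime n ≤ nthPrime (n + s) := by lia
        exact le_sub_iff_add_le.2 (by exact_mod_cast hgap')
    _ ≤ ∑ n ∈ range N, ((nthPrime (n + s) : ℝ) - nthPrime n) :=
        sum_le_sum_of_subset_of_nonneg (filter_subset _ _) fun n _ _ =>
          sub_nonneg.2 (by exact_mod_cast strictMono_nthPrime.monotone (Nat.le_add_right n s))
    _ ≤ s * X := sum_range_shift_sub_le (f := fun n => (nthPrime n : ℝ))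
        (fun n => Nat.cast_nonneg _) fun n hn => by
          exact_mod_cast nthPrime_le_of_lt_primeCounting (hn.trans_le hN)

theorem primeCounting_le_card_primeClusters_add (s H w X : ℕ) :
    (Nat.primeCounting X : ℝ) ≤ #(primeClusters s H w X) + s * X / (H + 1) + (w + 1) + s := by
  rcases lt_or_ge (Nat.primeCounting X) s with hlt | hge
  · have hlt' : (Nat.primeCounting X : ℝ) ≤ s := by exact_mod_cast hlt.le
    exact hlt'.trans (le_add_of_nonneg_left (by positivity))
  obtain ⟨N, hN⟩ := Nat.exists_eq_add_of_le' hge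
  set B := {n ∈ range N | H < nthPrime (n + s) - nthPrime n}
  have hcover : range N ⊆ primeClusters s H w X ∪ (B ∪ range (w + 1)) := by
    intro n hn
    have hn' := mem_range.1 hn
    have hX : nthPrime (n + s) ≤ X := nthPrime_le_of_lt_primeCounting (by lia)
    have hle : n ≤ nthPrime n := strictMono_nthPrime.le_apply
    have hmono : nthPrime n ≤ nthPrime (n + s) := strictMono_nthPrime.monotone (by lia)
    simp only [mem_union, B, primeClusters, mem_filter, mem_range]
    lia
  have hcard : N ≤ #(primeClusters s H w X) + (#B + (w + 1)) := by
    calc N = #(range N) := (card_range N).symm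
      _ ≤ #(primeClusters s H w X ∪ (B ∪ range (w + 1))) := card_le_card hcover
      _ ≤ #(primeClusters s H w X) + (#B + #(range (w + 1))) :=
          (card_union_le _ _).trans (Nat.add_le_add_left (card_union_le _ _) _)
      _ = #(primeClusters s H w X) + (#B + (w + 1)) := by rw [card_range]
  have hcard' : (N : ℝ) ≤ #(primeClusters s H w X) + (#B + (w + 1)) := by exact_mod_cast hcard
  have hB := card_long_gaps_le hN.ge H
  rw [hN]
  push_cast
  linarith

theorem div_log_sub_two_le_primeCounting {X : ℕ} (hX : 1 ≤ Real.log X) :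
    69 / 100 * (X / Real.log X) - 2 ≤ (Nat.primeCounting X : ℝ) := by
  have hX0 : X ≠ 0 := by
    rintro rfl
    norm_num at hX
  have hX1 : (1 : ℝ) ≤ X := Nat.one_le_cast.2 (Nat.one_le_iff_ne_zero.2 hX0)
  have hlog : Real.log (X + 1) ≤ 1 + Real.log X := by
    calc Real.log (X + 1) ≤ Real.log (2 * X) := Real.log_le_log (by positivity) (by linarith)
      _ = Real.log 2 + Real.log X := Real.log_mul (by norm_num) (by positivity)
      _ ≤ 1 + Real.log X := by linarith [Real.log_two_lt_d9]
  refine le_trans ?_ (Chebyshev.pi_ge X)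
  rw [le_div_iff₀ (by linarith), sub_mul, mul_assoc, div_mul_cancel₀ _ (by linarith)]
  nlinarith [Real.log_two_gt_d9]

end PrimeClusters

section PrimeWords

open Finset

/-- The residues modulo `q` of the consecutive primes starting with the `n`-th one spell `a`. -/
def OccursAt {q k : ℕ} (a : Fin k → (ZMod q)ˣ) (n : ℕ) : Prop :=
  ∀ i : Fin k, ((nthPrime (n + i) : ℕ) : ZMod q) = a i

open scoped Classical in
/-- The members of `primeClusters (r + 1) H w X` at which the word `a` occurs. -/
noncomputable def wordClusters {q r : ℕ} (a : Fin (r + 2) → (ZMod q)ˣ) (H w X : ℕ) : Finset ℕ :=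
  {n ∈ primeClusters (r + 1) H w X | OccursAt a n}

/-- The gaps between the `s + 1` consecutive primes starting with the `n`-th one, reduced modulo
`H + 1`; they are the true gaps as soon as the primes span at most `H`. -/
noncomputable def primeGaps (s H n : ℕ) : Fin s → Fin (H + 1) :=
  fun t => Fin.ofNat (H + 1) (nthPrime (n + t + 1) - nthPrime (n + t))

variable {q r s H n w X : ℕ}

theorem mem_wordClusters {a : Fin (r + 2) → (ZMod q)ˣ} :
    n ∈ wordClusters a H w X ↔ n ∈ primeClusters (r + 1) H w X ∧ OccursAt a n := by
  simp only [wordClusters, mem_filter]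

theorem nthPrime_add_primeGaps (hspan : nthPrime (n + s) - nthPrime n ≤ H) (t : Fin s) :
    nthPrime (n + t) + primeGaps s H n t = nthPrime (n + t + 1) := by
  have hlt : nthPrime (n + t) < nthPrime (n + t + 1) := strictMono_nthPrime (Nat.lt_succ_self _)
  have hle : nthPrime (n + t + 1) ≤ nthPrime (n + s) := strictMono_nthPrime.monotone (by lia)
  have hge : nthPrime n ≤ nthPrime (n + t) := strictMono_nthPrime.monotone (by lia)
  rw [primeGaps, Fin.val_ofNat, Nat.mod_eq_of_lt (by lia)]
  lia

theorem nthPrime_add_partialSum_primeGaps (hspan : nthPrime (n + s) - nthPrime n ≤ H)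
    (i : Fin (s + 1)) :
    nthPrime n + Fin.partialSum (fun t => (primeGaps s H n t : ℕ)) i = nthPrime (n + i) := by
  induction i using Fin.induction with
  | zero => simp
  | succ i ih =>
    rw [Fin.partialSum_succ, ← add_assoc, ih, Fin.val_castSucc, nthPrime_add_primeGaps hspan,
      Fin.val_succ, add_assoc]

theorem strictMono_partialSum_primeGaps (hspan : nthPrime (n + s) - nthPrime n ≤ H) :
    StrictMono (Fin.partialSum fun t => (primeGaps s H n t : ℕ)) := by
  intro i j hij
  have hlt : nthPrime (n + i) < nthPrime (n + j) :=
    strictMono_nthPrime (Nat.add_lt_add_left hij n)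
  rw [← nthPrime_add_partialSum_primeGaps hspan, ← nthPrime_add_partialSum_primeGaps hspan] at hlt
  exact lt_of_add_lt_add_left hlt

theorem partialSum_primeGaps_le (hspan : nthPrime (n + s) - nthPrime n ≤ H) (i : Fin (s + 1)) :
    Fin.partialSum (fun t => (primeGaps s H n t : ℕ)) i ≤ H := by
  have hsum := nthPrime_add_partialSum_primeGaps hspan i
  have hle : nthPrime (n + i) ≤ nthPrime (n + s) := strictMono_nthPrime.monotone (by lia)
  lia

theorem one_le_exp_mul_prod_gapWeight (hspan : nthPrime (n + (r + 1)) - nthPrime n ≤ H)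
    {a : Fin (r + 2) → (ZMod q)ˣ} (ha : OccursAt a n) {T : ℝ} (hT : 0 < T) :
    1 ≤ Real.exp (H / T) *
      ∏ t, gapWeight q T (a (Fin.succ t) - a (Fin.castSucc t)) (primeGaps (r + 1) H n t) := by
  set g := primeGaps (r + 1) H n
  have hclass (t : Fin (r + 1)) : ((g t : ℕ) : ZMod q) = a t.succ - a t.castSucc := by
    rw [← ha, ← ha, Fin.val_succ, Fin.val_castSucc, ← add_assoc, ← nthPrime_add_primeGaps hspan t]
    push_cast
    ring
  have hprod : ∏ t, gapWeight q T (a (Fin.succ t) - a (Fin.castSucc t)) (g t) =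
      Real.exp (-((∑ t, (g t : ℕ) : ℕ) : ℝ) / T) := by
    push_cast
    rw [← sum_neg_distrib, sum_div, Real.exp_sum]
    exact prod_congr rfl fun t _ => if_pos (hclass t)
  have hsum : ((∑ t, (g t : ℕ) : ℕ) : ℝ) ≤ H := by
    exact_mod_cast (partialSum_last _).symm.trans_le (partialSum_primeGaps_le hspan _)
  rw [hprod, ← Real.exp_add, Real.one_le_exp_iff, ← add_div]
  exact div_nonneg (by linarith) hT.le

theorem card_wordClusters_filter_primeGaps_le [NeZero q] (a : Fin (r + 2) → (ZMod q)ˣ)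
    (g : Fin (r + 1) → Fin (H + 1)) :
    #{n ∈ wordClusters a H w X | primeGaps (r + 1) H n = g} ≤
      #(primeTuples q (a 0 : ZMod q).val w X (Fin.partialSum fun t => (g t : ℕ))) := by
  refine card_le_card_of_injOn nthPrime (fun n hn => ?_) strictMono_nthPrime.injective.injOn
  obtain ⟨hword, rfl⟩ := mem_filter.1 hn
  obtain ⟨hcluster, ha⟩ := mem_wordClusters.1 hword
  obtain ⟨-, hX, hw, hspan⟩ := mem_filter.1 hcluster
  have hmono (i : ℕ) : nthPrime n ≤ nthPrime (n + i) :=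
    strictMono_nthPrime.monotone (Nat.le_add_right n i)
  refine mem_coe.2 (mem_filter.2 ⟨mem_range.2 (Nat.lt_succ_of_le ((hmono _).trans hX)), ?_,
    fun i => ?_⟩)
  · rw [← ha 0, ZMod.val_natCast, Fin.val_zero, add_zero]
  · rw [nthPrime_add_partialSum_primeGaps hspan]
    exact ⟨Nat.prime_nth_prime _, hw.trans_le (hmono i)⟩

theorem card_wordClusters_filter_primeGaps_le_gapWeight (hq : 0 < q) (a : Fin (r + 2) → (ZMod q)ˣ)
    (X : ℕ) {w z : ℕ} (hw : 2 ≤ w) (hz : 2 ≤ z)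
    (hlog : 2 * (r + 2 : ℕ) * (Real.log w + Real.log 4) ≤ Real.log z) {M : ℝ}
    (hM : ∏ p ∈ Nat.primesLE (4 * (r + 2) ^ 6), eulerFactor p ≤ M) {T : ℝ} (hT : 0 < T)
    (g : Fin (r + 1) → Fin (H + 1)) :
    (#{n ∈ wordClusters a H w X | primeGaps (r + 1) H n = g} : ℝ) ≤
      Real.exp (H / T) *
        (∏ t, gapWeight q T (a (Fin.succ t) - a (Fin.castSucc t)) (g t)) *
      (2 * ((X / q : ℕ) + 1 + (z : ℝ) ^ 6) *
        ((M * ((q : ℝ) / q.totient) / Real.log w) ^ (r + 2) *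
          pairDivisorSum q H (Fin.partialSum fun t => (g t : ℕ)))) := by
  have : NeZero q := ⟨hq.ne'⟩
  have hM0 : 0 ≤ M := zero_le_one.trans ((one_le_prod_eulerFactor_primesLE _).trans hM)
  have hdivisors : 0 ≤ pairDivisorSum q H (Fin.partialSum fun t => (g t : ℕ)) := by
    unfold pairDivisorSum
    positivity
  rcases eq_empty_or_nonempty {n ∈ wordClusters a H w X | primeGaps (r + 1) H n = g} with
    hempty | ⟨n, hn⟩
  · have hweight := prod_nonneg fun t (_ : t ∈ univ) =>
      gapWeight_nonneg q T (a (Fin.succ t) - a (Fin.castSucc t)) (g t)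
    rw [hempty, card_empty, Nat.cast_zero]
    positivity
  have hcard := card_wordClusters_filter_primeGaps_le (w := w) (X := X) a g
  obtain ⟨hword, rfl⟩ := mem_filter.1 hn
  obtain ⟨hcluster, ha⟩ := mem_wordClusters.1 hword
  obtain ⟨-, -, -, hspan⟩ := mem_filter.1 hcluster
  refine (Nat.cast_le.2 hcard).trans ((card_primeTuples_le (by lia) hq _ X
    (strictMono_partialSum_primeGaps hspan) (fun i j _ => (Nat.sub_le _ _).trans
      (partialSum_primeGaps_le hspan j)) hw hz hlog hM).trans ?_)
  exact le_mul_of_one_le_left (by positivity) (one_le_exp_mul_prod_gapWeight hspan ha hT)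

theorem card_wordClusters_le (hq : 0 < q) (a : Fin (r + 2) → (ZMod q)ˣ) (H X : ℕ) {w z : ℕ}
    (hw : 2 ≤ w) (hz : 2 ≤ z)
    (hlog : 2 * (r + 2 : ℕ) * (Real.log w + Real.log 4) ≤ Real.log z) {M : ℝ}
    (hM : ∏ p ∈ Nat.primesLE (4 * (r + 2) ^ 6), eulerFactor p ≤ M) {T : ℝ} (hT : 0 < T) :
    (#(wordClusters a H w X) : ℝ) ≤ 2 * ((X / q : ℕ) + 1 + (z : ℝ) ^ 6) *
      ((M * ((q : ℝ) / q.totient) / Real.log w) ^ (r + 2) * (Real.exp (H / T) *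
        ((r + 2) ^ 2 * ((1 + T / q) ^ r * (2 * √(H : ℝ) + 3 * (T / q)))))) := by
  have hM0 : 0 ≤ M := zero_le_one.trans ((one_le_prod_eulerFactor_primesLE _).trans hM)
  set K := 2 * ((X / q : ℕ) + 1 + (z : ℝ) ^ 6)
  set R := M * ((q : ℝ) / q.totient) / Real.log w
  calc (#(wordClusters a H w X) : ℝ)
      = ∑ g : Fin (r + 1) → Fin (H + 1),
          (#{n ∈ wordClusters a H w X | primeGaps (r + 1) H n = g} : ℝ) := by
        rw [card_eq_sum_card_fiberwise (f := primeGaps (r + 1) H) (t := univ)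
          fun _ _ => mem_coe.2 (mem_univ _), Nat.cast_sum]
    _ ≤ ∑ g : Fin (r + 1) → Fin (H + 1), Real.exp (H / T) *
          (∏ t, gapWeight q T (a (Fin.succ t) - a (Fin.castSucc t)) (g t)) *
          (K * (R ^ (r + 2) * pairDivisorSum q H (Fin.partialSum fun t => (g t : ℕ)))) :=
        sum_le_sum fun g _ =>
          card_wordClusters_filter_primeGaps_le_gapWeight hq a X hw hz hlog hM hT g
    _ = K * (R ^ (r + 2) * (Real.exp (H / T) * ∑ g : Fin (r + 1) → Fin (H + 1),
          (∏ t, gapWeight q T (a (Fin.succ t) - a (Fin.castSucc t)) (g t)) *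
            pairDivisorSum q H (Fin.partialSum fun t => (g t : ℕ)))) := by
        simp only [mul_sum]
        exact sum_congr rfl fun g _ => by ring
    _ ≤ _ := by
        gcongr
        exact sum_prod_gapWeight_mul_pairDivisorSum_le hq hT _ H (H + 1)

end PrimeWords

section Counting

open Finset

/-- The height `X` up to which clusters of `k` primes above `u` are counted: the power is large
enough for the sieve error to be negligible. -/
def clusterHeight (k u : ℕ) : ℕ := u ^ (25 * k)

/-- The logarithm of `clusterHeight k u`, which is the average gap between the primes counted. -/
noncomputable def clusterScale (k u : ℕ) : ℝ := 25 * k * Real.log u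

/-- A span four times larger than that of an average cluster of `k` primes. -/
noncomputable def clusterSpan (k u : ℕ) : ℕ := ⌊4 * k * clusterScale k u⌋₊

theorem log_clusterHeight (k u : ℕ) : Real.log (clusterHeight k u : ℕ) = clusterScale k u := by
  simp [clusterHeight, clusterScale, Real.log_pow]

theorem clusterScale_pos {k u : ℕ} (hk : 0 < k) (hu : 2 ≤ u) : 0 < clusterScale k u := by
  have hlog : 0 < Real.log u := Real.log_pos (by exact_mod_cast hu)
  unfold clusterScale
  positivity

theorem sq_div_le_clusterHeight_div_clusterScale {k u : ℕ} (hk : 0 < k) (hu : 2 ≤ u) :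
    (u : ℝ) ^ 2 / (25 * k) ≤ clusterHeight k u / clusterScale k u := by
  have hu' : (2 : ℝ) ≤ u := by exact_mod_cast hu
  have hlog : Real.log u ≤ u := Real.log_le_self (by positivity)
  rw [div_le_div_iff₀ (by positivity) (clusterScale_pos hk hu)]
  calc (u : ℝ) ^ 2 * clusterScale k u ≤ (u : ℝ) ^ 2 * (25 * k * u) := by
        unfold clusterScale
        gcongr
    _ = (u : ℝ) ^ 3 * (25 * k) := by ring
    _ ≤ clusterHeight k u * (25 * k) := by
        unfold clusterHeight
        push_cast
        gcongr
        exacts [by linarith, by lia]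

theorem tendsto_log_natCast_atTop : Tendsto (fun n : ℕ => Real.log n) atTop atTop :=
  Real.tendsto_log_atTop.comp tendsto_natCast_atTop_atTop

theorem tendsto_clusterScale {k : ℕ} (hk : 0 < k) : Tendsto (clusterScale k) atTop atTop :=
  tendsto_log_natCast_atTop.const_mul_atTop (by positivity)

theorem tendsto_clusterHeight_div_clusterScale {k : ℕ} (hk : 0 < k) :
    Tendsto (fun u => clusterHeight k u / clusterScale k u) atTop atTop := by
  have hsq : Tendsto (fun u : ℕ => (u : ℝ) ^ 2 / (25 * k)) atTop atTop :=
    ((tendsto_pow_atTop two_ne_zero).comp tendsto_natCast_atTop_atTop).atTop_div_const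
      (by positivity)
  refine tendsto_atTop_mono' atTop ?_ hsq
  filter_upwards [eventually_ge_atTop 2] with u hu
  exact sq_div_le_clusterHeight_div_clusterScale hk hu

theorem eventually_le_card_primeClusters {k s : ℕ} (hk : 0 < k) (hs : s ≤ k) :
    ∀ᶠ u in atTop, clusterHeight k u / clusterScale k u / 8 ≤
      (#(primeClusters s (clusterSpan k u) u (clusterHeight k u)) : ℝ) := by
  filter_upwards [eventually_ge_atTop (1600 * k), (tendsto_clusterScale hk).eventually_ge_atTop 1]
    with u huk hT
  have hu : 2 ≤ u := by lia
  have hku : 1600 * (k : ℝ) ≤ u := by exact_mod_cast huk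
  have hs' : (s : ℝ) ≤ k := by exact_mod_cast hs
  have hk' : (1 : ℝ) ≤ k := by exact_mod_cast hk
  have hcount := primeCounting_le_card_primeClusters_add s (clusterSpan k u) u (clusterHeight k u)
  have hcheb := div_log_sub_two_le_primeCounting ((log_clusterHeight k u).symm ▸ hT)
  rw [log_clusterHeight] at hcheb
  set T := clusterScale k u
  set X : ℝ := (clusterHeight k u : ℝ)
  have hlong : s * X / (clusterSpan k u + 1) ≤ X / T / 4 := by
    have hspan : 4 * k * T < clusterSpan k u + 1 := Nat.lt_floor_add_one _
    calc s * X / (clusterSpan k u + 1) ≤ k * X / (4 * k * T) := by gcongr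
      _ = X / T / 4 := by field_simp
  have hlarge : 64 * (u : ℝ) ≤ X / T := by
    refine le_trans ?_ (sq_div_le_clusterHeight_div_clusterScale hk hu)
    rw [le_div_iff₀ (by positivity)]
    nlinarith
  linarith

theorem clusterHeight_div_add_le {k q u : ℕ} (hk : 0 < k) (hq : 0 < q) (hu : 2 * q ≤ u) :
    ((clusterHeight k u / q : ℕ) : ℝ) + 1 + ((u ^ (4 * k) : ℕ) : ℝ) ^ 6 ≤
      2 * (clusterHeight k u / q) := by
  have hq' : (0 : ℝ) < q := by exact_mod_cast hq
  have hu1 : (1 : ℝ) ≤ u := by exact_mod_cast (by lia : 1 ≤ u)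
  have hquot : ((clusterHeight k u / q : ℕ) : ℝ) ≤ clusterHeight k u / q := Nat.cast_div_le
  have hone : 1 ≤ (u : ℝ) ^ (24 * k) := one_le_pow₀ hu1
  have hpow : ((u ^ (4 * k) : ℕ) : ℝ) ^ 6 = (u : ℝ) ^ (24 * k) := by
    push_cast
    rw [← pow_mul]
    ring_nf
  have herror : 2 * (u : ℝ) ^ (24 * k) ≤ clusterHeight k u / q := by
    rw [le_div_iff₀ hq']
    calc 2 * (u : ℝ) ^ (24 * k) * q = (u : ℝ) ^ (24 * k) * (2 * q) := by ring
      _ ≤ (u : ℝ) ^ (24 * k) * (u : ℝ) ^ k := by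
          gcongr
          exact (by exact_mod_cast hu : 2 * (q : ℝ) ≤ u).trans (le_self_pow₀ hu1 hk.ne')
      _ = clusterHeight k u := by
          rw [clusterHeight, ← pow_add]
          push_cast
          ring_nf
  rw [hpow]
  linarith

theorem gap_factor_le {a e y t : ℝ} (ha : 0 ≤ a) (he : 0 ≤ e) (hy : 1 ≤ y) (ht0 : 0 ≤ t)
    (ht : 2 * t ≤ y) (r : ℕ) :
    (a * y⁻¹) ^ (r + 2) * (e ^ (r + 2) * ((r + 2) ^ 2 * ((1 + y) ^ r * (2 * t + 3 * y)))) ≤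
      4 * (r + 2) ^ 2 * (2 * (a * e)) ^ (r + 2) * y⁻¹ := by
  calc (a * y⁻¹) ^ (r + 2) * (e ^ (r + 2) * ((r + 2) ^ 2 * ((1 + y) ^ r * (2 * t + 3 * y))))
      ≤ (a * y⁻¹) ^ (r + 2) * (e ^ (r + 2) * ((r + 2) ^ 2 * ((2 * y) ^ r * (4 * y)))) := by
        gcongr <;> linarith
    _ = 4 * (r + 2) ^ 2 * (2 ^ r * (a * e) ^ (r + 2)) * y⁻¹ := by
        simp only [mul_pow, inv_pow, pow_add]
        field_simp
    _ ≤ 4 * (r + 2) ^ 2 * (2 ^ (r + 2) * (a * e) ^ (r + 2)) * y⁻¹ := by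
        gcongr
        exacts [one_le_two, by lia]
    _ = 4 * (r + 2) ^ 2 * (2 * (a * e)) ^ (r + 2) * y⁻¹ := by rw [mul_pow 2]

theorem two_mul_sqrt_clusterSpan_le {k q u : ℕ} (hk : 0 < k) (hu : 2 ≤ u) (hq : 0 < q)
    (hT : 16 * (k : ℝ) * q ^ 2 ≤ clusterScale k u) :
    2 * √(clusterSpan k u : ℝ) ≤ clusterScale k u / q := by
  have hT0 := clusterScale_pos hk hu
  have hspan : (clusterSpan k u : ℝ) ≤ 4 * k * clusterScale k u := Nat.floor_le (by positivity)
  have hsqrt : √(clusterSpan k u : ℝ) ≤ clusterScale k u / (2 * q) := by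
    refine Real.sqrt_le_iff.2 ⟨by positivity, hspan.trans ?_⟩
    rw [div_pow, le_div_iff₀ (by positivity)]
    nlinarith
  calc 2 * √(clusterSpan k u : ℝ) ≤ 2 * (clusterScale k u / (2 * q)) := by gcongr
    _ = clusterScale k u / q := by field_simp

theorem exp_clusterSpan_div_clusterScale_le {k u : ℕ} (hk : 0 < k) (hu : 2 ≤ u) :
    Real.exp (clusterSpan k u / clusterScale k u) ≤ Real.exp 4 ^ k := by
  have hT0 := clusterScale_pos hk hu
  rw [← Real.exp_nat_mul, Real.exp_le_exp, div_le_iff₀ hT0, mul_comm _ (4 : ℝ)]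
  exact Nat.floor_le (by positivity)

theorem two_mul_log_add_log_four_le_log_pow {u : ℕ} (hu : 4 ≤ u) (k : ℕ) :
    2 * (k : ℝ) * (Real.log u + Real.log 4) ≤ Real.log ((u ^ (4 * k) : ℕ) : ℝ) := by
  have hlog : Real.log 4 ≤ Real.log u := Real.log_le_log (by norm_num) (by exact_mod_cast hu)
  calc 2 * (k : ℝ) * (Real.log u + Real.log 4) ≤ 2 * k * (Real.log u + Real.log u) := by gcongr
    _ = Real.log ((u ^ (4 * k) : ℕ) : ℝ) := by
        push_cast
        rw [Real.log_pow]
        push_cast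
        ring

theorem eventually_card_wordClusters_le {r q : ℕ} (hq : 0 < q) {M : ℝ}
    (hM : ∏ p ∈ Nat.primesLE (4 * (r + 2) ^ 6), eulerFactor p ≤ M) :
    ∀ᶠ u in atTop, ∀ a : Fin (r + 2) → (ZMod q)ˣ,
      (#(wordClusters a (clusterSpan (r + 2) u) u (clusterHeight (r + 2) u)) : ℝ) ≤
        16 * (r + 2) ^ 2 * (50 * (r + 2) * M * Real.exp 4 / q.totient) ^ (r + 2) *
          (clusterHeight (r + 2) u / clusterScale (r + 2) u) := by
  have hk : 0 < r + 2 := by lia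
  have hM0 : 0 ≤ M := zero_le_one.trans ((one_le_prod_eulerFactor_primesLE _).trans hM)
  filter_upwards [eventually_ge_atTop 4, eventually_ge_atTop (2 * q),
    (tendsto_clusterScale hk).eventually_ge_atTop (q : ℝ),
    (tendsto_clusterScale hk).eventually_ge_atTop (16 * ((r + 2 : ℕ) : ℝ) * q ^ 2)]
    with u hu huq hTq hTq2 a
  have hlogu : 0 < Real.log u := Real.log_pos (by exact_mod_cast (by lia : 1 < u))
  have hz : 2 ≤ u ^ (4 * (r + 2)) := (by lia : 2 ≤ u).trans (Nat.le_self_pow (by lia) u)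
  have hT0 := clusterScale_pos hk (by lia : 2 ≤ u)
  refine (card_wordClusters_le hq a _ _ (by lia) hz
    (two_mul_log_add_log_four_le_log_pow hu _) hM hT0).trans ?_
  have hheight := clusterHeight_div_add_le hk hq huq
  have hexp := exp_clusterSpan_div_clusterScale_le hk (by lia : 2 ≤ u)
  have hsqrt := two_mul_sqrt_clusterSpan_le hk (by lia) hq hTq2
  set T := clusterScale (r + 2) u with hT
  set H := clusterSpan (r + 2) u
  set X := clusterHeight (r + 2) u
  have hsieve : M * ((q : ℝ) / q.totient) / Real.log u =
      (25 * (r + 2) * M / q.totient) * (T / q)⁻¹ := by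
    rw [hT, clusterScale]
    push_cast
    field_simp
  calc _ ≤ 2 * (2 * (X / q)) * ((25 * (r + 2) * M / q.totient * (T / q)⁻¹) ^ (r + 2) *
          (Real.exp 4 ^ (r + 2) * ((r + 2) ^ 2 * ((1 + T / q) ^ r * (2 * √H + 3 * (T / q)))))) := by
        rw [hsieve]
        gcongr
    _ ≤ 2 * (2 * (X / q)) * (4 * (r + 2) ^ 2 *
          (2 * (25 * (r + 2) * M / q.totient * Real.exp 4)) ^ (r + 2) * (T / q)⁻¹) := by
        gcongr 2 * (2 * (X / q)) * ?_
        exact gap_factor_le (by positivity) (by positivity)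
          ((one_le_div (by positivity)).2 hTq) (Real.sqrt_nonneg _) hsqrt r
    _ = 16 * (r + 2) ^ 2 * (50 * (r + 2) * M * Real.exp 4 / q.totient) ^ (r + 2) * (X / T) := by
        rw [show 2 * (25 * (r + 2) * M / q.totient * Real.exp 4) =
          50 * (r + 2) * M * Real.exp 4 / q.totient by ring]
        field_simp
        ring

end Counting

section RecurrentWords

open Finset

/-- The words of length `k` spelled infinitely often by the residues modulo `q` of consecutive
primes. -/
def recurrentWords (q k : ℕ) : Set (Fin k → (ZMod q)ˣ) :=
  {a | ∃ᶠ n in atTop, OccursAt a n}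

variable {q k r : ℕ}

theorem exists_occursAt {n : ℕ} (hq : 0 < q) (hn : q < nthPrime n) :
    ∃ a : Fin k → (ZMod q)ˣ, OccursAt a n := by
  have hcoprime (i : Fin k) : (nthPrime (n + i)).Coprime q := by
    have hmono : nthPrime n ≤ nthPrime (n + i) := strictMono_nthPrime.monotone (by lia)
    exact Nat.coprime_of_lt_prime hq.ne' (hn.trans_le hmono) (Nat.prime_nth_prime _)
  exact ⟨fun i => ZMod.unitOfCoprime _ (hcoprime i), fun i => by simp⟩

theorem card_primeClusters_le_sum_card_wordClusters [NeZero q] (r H : ℕ) {w : ℕ} (hw : q ≤ w)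
    (X : ℕ) : #(primeClusters (r + 1) H w X) ≤
      ∑ a : Fin (r + 2) → (ZMod q)ˣ, #(wordClusters a H w X) := by
  classical
  refine (card_le_card fun n hn => ?_).trans card_biUnion_le
  obtain ⟨-, -, hwn, -⟩ := mem_filter.1 hn
  obtain ⟨a, ha⟩ := exists_occursAt (k := r + 2) (NeZero.pos q) (hw.trans_lt hwn)
  exact mem_biUnion.2 ⟨a, mem_univ a, mem_wordClusters.2 ⟨hn, ha⟩⟩

theorem card_wordClusters_le_ncard_occursAt {a : Fin (r + 2) → (ZMod q)ˣ}
    (ha : a ∉ recurrentWords q (r + 2)) (H w X : ℕ) :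
    #(wordClusters a H w X) ≤ {n | OccursAt a n}.ncard := by
  rw [← Set.ncard_coe_finset]
  refine Set.ncard_le_ncard (fun n hn => (mem_wordClusters.1 (mem_coe.1 hn)).2) ?_
  exact Set.not_infinite.1 fun hinf => ha (Nat.frequently_atTop_iff_infinite.2 hinf)

theorem card_primeClusters_le_ncard_recurrentWords_mul_add [NeZero q] {H w X : ℕ} (hw : q ≤ w)
    {W : ℝ} (hW : ∀ a : Fin (r + 2) → (ZMod q)ˣ, (#(wordClusters a H w X) : ℝ) ≤ W) :
    (#(primeClusters (r + 1) H w X) : ℝ) ≤ (recurrentWords q (r + 2)).ncard * W +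
      ∑ a : Fin (r + 2) → (ZMod q)ˣ, ({n | OccursAt a n}.ncard : ℝ) := by
  classical
  calc (#(primeClusters (r + 1) H w X) : ℝ)
      ≤ ∑ a : Fin (r + 2) → (ZMod q)ˣ, (#(wordClusters a H w X) : ℝ) := by
        exact_mod_cast card_primeClusters_le_sum_card_wordClusters r H hw X
    _ ≤ ∑ a : Fin (r + 2) → (ZMod q)ˣ, ((if a ∈ recurrentWords q (r + 2) then W else 0) +
          ({n | OccursAt a n}.ncard : ℝ)) := by
        refine sum_le_sum fun a _ => ?_
        split_ifs with ha
        · exact (hW a).trans (le_add_of_nonneg_right (Nat.cast_nonneg _))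
        · rw [zero_add]
          exact_mod_cast card_wordClusters_le_ncard_occursAt ha H w X
    _ = _ := by
        rw [sum_add_distrib, ← sum_filter, sum_const, nsmul_eq_mul, ← Set.ncard_coe_finset,
          coe_filter_univ]
        rfl

theorem totient_pow_le_mul_ncard_recurrentWords (r : ℕ) (hq : 0 < q) {M : ℝ}
    (hM : ∏ p ∈ Nat.primesLE (4 * (r + 2) ^ 6), eulerFactor p ≤ M) :
    (q.totient : ℝ) ^ (r + 2) ≤ 256 * (r + 2) ^ 2 * (50 * (r + 2) * M * Real.exp 4) ^ (r + 2) *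
      (recurrentWords q (r + 2)).ncard := by
  have : NeZero q := ⟨hq.ne'⟩
  have hk : 0 < r + 2 := by lia
  set C : ℝ := ∑ a : Fin (r + 2) → (ZMod q)ˣ, ({n | OccursAt a n}.ncard : ℝ)
  obtain ⟨u, hword, hcluster, huq, hlarge, hpos⟩ := ((eventually_card_wordClusters_le hq hM).and
    ((eventually_le_card_primeClusters hk (by lia : r + 1 ≤ r + 2)).and
    ((eventually_ge_atTop q).and
    (((tendsto_clusterHeight_div_clusterScale hk).eventually_ge_atTop (16 * C)).and
    ((tendsto_clusterHeight_div_clusterScale hk).eventually_gt_atTop 0))))).exists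
  have hcount := hcluster.trans (card_primeClusters_le_ncard_recurrentWords_mul_add huq hword)
  set Y := clusterHeight (r + 2) u / clusterScale (r + 2) u
  set N : ℝ := ((recurrentWords q (r + 2)).ncard : ℝ)
  set b := 50 * (r + 2) * M * Real.exp 4
  have hdensity : 1 / 16 ≤ N * (16 * (r + 2) ^ 2 * (b / q.totient) ^ (r + 2)) := by
    refine le_of_mul_le_mul_right ?_ hpos
    linarith
  rw [div_pow] at hdensity
  field_simp at hdensity
  linarith

theorem mul_add_two_sq_le_pow (r : ℕ) : 256 * ((r : ℝ) + 2) ^ 2 ≤ 64 ^ (r + 2) := by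
  have hlt : (r : ℝ) + 2 ≤ 2 ^ (r + 2) := by exact_mod_cast (r + 2).lt_two_pow_self.le
  calc 256 * ((r : ℝ) + 2) ^ 2 ≤ 16 ^ (r + 2) * (2 ^ (r + 2)) ^ 2 := by
        gcongr
        calc (256 : ℝ) = 16 ^ 2 := by norm_num
          _ ≤ 16 ^ (r + 2) := pow_le_pow_right₀ (by norm_num) (by lia)
    _ = 64 ^ (r + 2) := by
        rw [← pow_mul, mul_comm (r + 2), pow_mul, ← mul_pow]
        norm_num

theorem four_mul_pow_six_rpow_le {k : ℝ} (hk : 0 ≤ k) :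
    (4 * k ^ 6) ^ (1 / 12 : ℝ) ≤ 2 * √k := by
  have hfour : (4 : ℝ) ^ (1 / 12 : ℝ) ≤ 2 :=
    calc (4 : ℝ) ^ (1 / 12 : ℝ) ≤ 4 ^ (1 / 2 : ℝ) :=
          Real.rpow_le_rpow_of_exponent_le (by norm_num) (by norm_num)
      _ = 2 := by
          rw [← Real.sqrt_eq_rpow, Real.sqrt_eq_iff_eq_sq] <;> norm_num
  have hroot : (k ^ 6) ^ (1 / 12 : ℝ) = √k := by
    rw [← Real.rpow_natCast, ← Real.rpow_mul hk, Real.sqrt_eq_rpow]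
    norm_num
  rw [Real.mul_rpow (by norm_num) (by positivity), hroot]
  gcongr

theorem exists_totient_pow_le_pow_mul_ncard_recurrentWords :
    ∃ A : ℝ, 1 ≤ A ∧ ∀ r q : ℕ, 0 < q → (q.totient : ℝ) ^ (r + 2) ≤
      (A * ((r + 2) * √(r + 2))) ^ (r + 2) * (recurrentWords q (r + 2)).ncard := by
  obtain ⟨C, hC1, hC⟩ := exists_prod_eulerFactor_le_rpow (δ := 1 / 12) (by norm_num)
  have hexp : 1 ≤ Real.exp 4 := Real.one_le_exp (by norm_num)
  refine ⟨64 * (50 * (2 * C) * Real.exp 4), by nlinarith, fun r q hq => ?_⟩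
  have hM : ∏ p ∈ Nat.primesLE (4 * (r + 2) ^ 6), eulerFactor p ≤ C * (2 * √(r + 2)) := by
    refine (hC _ (Nat.succ_le_of_lt (by positivity))).trans ?_
    push_cast
    gcongr
    exact four_mul_pow_six_rpow_le (by positivity)
  calc (q.totient : ℝ) ^ (r + 2)
      ≤ 256 * (r + 2) ^ 2 * (50 * (r + 2) * (C * (2 * √(r + 2))) * Real.exp 4) ^ (r + 2) *
          (recurrentWords q (r + 2)).ncard := totient_pow_le_mul_ncard_recurrentWords r hq hM
    _ ≤ 64 ^ (r + 2) * (50 * (r + 2) * (C * (2 * √(r + 2))) * Real.exp 4) ^ (r + 2) *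
          (recurrentWords q (r + 2)).ncard := by
        gcongr
        exact mul_add_two_sq_le_pow r
    _ = _ := by
        rw [← mul_pow]
        ring_nf

theorem ncard_recurrentWords_le_of_le (hq : 0 < q) {m : ℕ} (hkm : k ≤ m) :
    (recurrentWords q k).ncard ≤ (recurrentWords q m).ncard := by
  have : NeZero q := ⟨hq.ne'⟩
  let restrict (a : Fin m → (ZMod q)ˣ) : Fin k → (ZMod q)ˣ := fun i => a (Fin.castLE hkm i)
  have hsub : recurrentWords q k ⊆ restrict '' recurrentWords q m := by
    intro b hb
    have hextend : ∃ᶠ n in atTop, ∃ a, OccursAt a n ∧ restrict a = b := by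
      refine (hb.and_eventually (eventually_ge_atTop q)).mono fun n ⟨hbn, hqn⟩ => ?_
      obtain ⟨a, ha⟩ := exists_occursAt (k := m) (n := n) hq
        ((hqn.trans_lt (by lia)).trans_le (Nat.add_two_le_nth_prime n))
      exact ⟨a, ha, funext fun i => Units.ext ((ha (Fin.castLE hkm i)).symm.trans (hbn i))⟩
    obtain ⟨a, ha⟩ := frequently_exists.1 hextend
    obtain ⟨-, -, hab⟩ := ha.exists
    exact ⟨a, ha.mono fun n hn => hn.1, hab⟩
  exact (Set.ncard_le_ncard hsub).trans (Set.ncard_image_le)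

theorem tendsto_consecCount_of_mem_recurrentWords {a : Fin k → (ZMod q)ˣ}
    (ha : a ∈ recurrentWords q k) : Tendsto (consecCount q k a) atTop atTop := by
  refine tendsto_atTop.2 fun N => ?_
  obtain ⟨t, ht, rfl⟩ := (Nat.frequently_atTop_iff_infinite.1 ha).exists_subset_card_eq N
  filter_upwards [(eventually_all_finset t).2 fun n _ => eventually_ge_atTop (nthPrime n : ℝ)]
    with x hx
  have hfinite : {n : ℕ | (nthPrime n : ℝ) ≤ x ∧ OccursAt a n}.Finite :=
    (Set.finite_Iic ⌊x⌋₊).subset fun n hn => strictMono_nthPrime.le_apply.trans (Nat.le_floor hn.1)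
  rw [← Set.ncard_coe_finset]
  exact Set.ncard_le_ncard (fun n hn => ⟨hx n hn, ht hn⟩) hfinite

theorem ncard_recurrentWords_le_ncard_tendsto_consecCount [NeZero q] :
    (recurrentWords q k).ncard ≤
      {a : Fin k → (ZMod q)ˣ | Tendsto (consecCount q k a) atTop atTop}.ncard :=
  Set.ncard_le_ncard fun _ => tendsto_consecCount_of_mem_recurrentWords

end RecurrentWords

section WordLength

theorem pow_mul_sq_mul_pow_le_pow {D E B s φ : ℝ} {r : ℕ} (hD : 1 ≤ D) (hE : 1 ≤ E) (hB : 0 ≤ B)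
    (hDs : D ^ 3 ≤ s) (hEB : E * B ≤ D * s ^ 3) (hφ : s ^ 4 ≤ φ) (hr : 10 ≤ r) :
    E ^ r * φ ^ 2 * B ^ (r + 2) ≤ φ ^ (r + 2) := by
  have hs : 1 ≤ s := (one_le_pow₀ hD).trans hDs
  have hD_pow : D ^ (r + 2) ≤ s ^ (r - 6) :=
    calc D ^ (r + 2) ≤ D ^ (3 * (r - 6)) := pow_le_pow_right₀ hD (by lia)
      _ = (D ^ 3) ^ (r - 6) := pow_mul D 3 (r - 6)
      _ ≤ s ^ (r - 6) := by gcongr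
  have hEB_pow : E ^ r * B ^ (r + 2) ≤ φ ^ r :=
    calc E ^ r * B ^ (r + 2) ≤ E ^ (r + 2) * B ^ (r + 2) := by
          gcongr
          lia
      _ = (E * B) ^ (r + 2) := (mul_pow E B _).symm
      _ ≤ (D * s ^ 3) ^ (r + 2) := by gcongr
      _ = D ^ (r + 2) * (s ^ 3) ^ (r + 2) := mul_pow _ _ _
      _ ≤ s ^ (r - 6) * (s ^ 3) ^ (r + 2) := by gcongr
      _ = (s ^ 4) ^ r := by
          rw [← pow_mul, ← pow_mul, ← pow_add]
          congr 1
          lia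
      _ ≤ φ ^ r := by gcongr
  calc E ^ r * φ ^ 2 * B ^ (r + 2) = E ^ r * B ^ (r + 2) * φ ^ 2 := by ring
    _ ≤ φ ^ r * φ ^ 2 := by gcongr
    _ = φ ^ (r + 2) := (pow_add φ r 2).symm

theorem ceil_log_add_two_le {m : ℕ} (hm : 4 ≤ Real.log m) : ⌈Real.log m⌉₊ + 2 ≤ m := by
  have hm0 : (0 : ℝ) < m := by
    refine Nat.cast_pos.2 (Nat.pos_of_ne_zero ?_)
    rintro rfl
    norm_num at hm
  have hceil : (⌈Real.log m⌉₊ : ℝ) < Real.log m + 1 := Nat.ceil_lt_add_one (by linarith)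
  have hquad : Real.log m ^ 2 / 2 ≤ m := by
    simpa [Real.exp_log hm0] using Real.pow_div_factorial_le_exp _ (by linarith : 0 ≤ Real.log m) 2
  have hle : (⌈Real.log m⌉₊ : ℝ) + 2 ≤ m := by nlinarith
  exact_mod_cast hle

theorem mul_sqrt_le {k L : ℝ} (hL : 0 ≤ L) (hk : k ≤ 2 * L) : k * √k ≤ 3 * √L ^ 3 := by
  have hsqrt : √k ≤ 3 / 2 * √L := by
    refine Real.sqrt_le_iff.2 ⟨by positivity, ?_⟩
    rw [mul_pow, Real.sq_sqrt hL]
    linarith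
  calc k * √k ≤ 2 * √L ^ 2 * (3 / 2 * √L) := by
        rw [Real.sq_sqrt hL]
        gcongr
    _ = 3 * √L ^ 3 := by ring

theorem eventually_mul_sq_mul_pow_le_pow {A : ℝ} (hA : 1 ≤ A) :
    ∀ᶠ m : ℕ in atTop, ∀ φ : ℝ, Real.log m ^ 2 ≤ φ → ∀ r : ℕ, r = ⌈Real.log m⌉₊ →
      m * φ ^ 2 * (A * ((r + 2) * √(r + 2))) ^ (r + 2) ≤ φ ^ (r + 2) := by
  set D := 3 * Real.exp 1 * A with hD
  have he : 1 ≤ Real.exp 1 := Real.one_le_exp zero_le_one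
  have hD1 : 1 ≤ D := by nlinarith
  filter_upwards [eventually_gt_atTop 0, tendsto_log_natCast_atTop.eventually_ge_atTop 10,
    tendsto_log_natCast_atTop.eventually_ge_atTop ((D ^ 3) ^ 2)] with m hm hL10 hLD φ hφ r hr
  set L := Real.log m
  have hL0 : 0 ≤ L := by linarith
  have hLr : L ≤ r := hr ▸ Nat.le_ceil L
  have hr10 : 10 ≤ r := by exact_mod_cast hL10.trans hLr
  have hrL : (r : ℝ) < L + 1 := hr ▸ Nat.ceil_lt_add_one hL0
  have hm_le : (m : ℝ) ≤ Real.exp 1 ^ r := by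
    rw [← Real.exp_nat_mul, mul_one, ← Real.log_le_iff_le_exp (by positivity)]
    exact hLr
  have hbase : Real.exp 1 * (A * ((r + 2) * √(r + 2))) ≤ D * √L ^ 3 :=
    calc Real.exp 1 * (A * ((r + 2) * √(r + 2))) ≤ Real.exp 1 * (A * (3 * √L ^ 3)) := by
          gcongr Real.exp 1 * (A * ?_)
          exact mul_sqrt_le hL0 (by linarith : (r : ℝ) + 2 ≤ 2 * L)
      _ = D * √L ^ 3 := by rw [hD]; ring
  have hs : √L ^ 4 = L ^ 2 := by
    rw [pow_mul (√L) 2 2, Real.sq_sqrt hL0]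
  refine le_trans ?_ (pow_mul_sq_mul_pow_le_pow hD1 he (by positivity)
    (Real.le_sqrt_of_sq_le hLD) hbase (hs.trans_le hφ) hr10)
  gcongr

end WordLength

theorem stmt3_general : ∀ᶠ m : ℕ in atTop, ∀ q : ℕ, 0 < q →
    Real.log m ^ 2 ≤ (q.totient : ℝ) → (m : ℝ) * (q.totient : ℝ) ^ 2 ≤
      ({a : Fin m → (ZMod q)ˣ | Tendsto (consecCount q m a) atTop atTop}.ncard : ℝ) := by
  obtain ⟨A, hA, hlower⟩ := exists_totient_pow_le_pow_mul_ncard_recurrentWords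
  filter_upwards [eventually_mul_sq_mul_pow_le_pow hA,
    tendsto_log_natCast_atTop.eventually_ge_atTop 4] with m hlength hm q hq hφ
  have : NeZero q := ⟨hq.ne'⟩
  set r := ⌈Real.log m⌉₊ with hr
  have hmany : (m : ℝ) * (q.totient : ℝ) ^ 2 ≤ (recurrentWords q (r + 2)).ncard := by
    refine le_of_mul_le_mul_right ?_
      (by positivity : 0 < (A * ((r + 2) * √((r : ℝ) + 2))) ^ (r + 2))
    calc _ ≤ (q.totient : ℝ) ^ (r + 2) := hlength _ hφ r hr
      _ ≤ _ := (hlower r q hq).trans_eq (mul_comm _ _)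
  refine hmany.trans (Nat.cast_le.2 ?_)
  exact (ncard_recurrentWords_le_of_le hq (ceil_log_add_two_le hm)).trans
    ncard_recurrentWords_le_ncard_tendsto_consecCount

theorem sq_le_of_mul_sq_lt {c L φ : ℝ} (hc0 : 0 < c) (hc1 : c ≤ 1)
    (hφ : 8 * c⁻¹ * Real.exp 1 ^ 2 * L ^ 2 < φ) : L ^ 2 ≤ φ := by
  have hcoeff : 1 ≤ 8 * c⁻¹ * Real.exp 1 ^ 2 := one_le_mul_of_one_le_of_one_le
    (one_le_mul_of_one_le_of_one_le (by norm_num) ((one_le_inv₀ hc0).2 hc1))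
    (one_le_pow₀ (Real.one_le_exp zero_le_one))
  exact (le_mul_of_one_le_left (sq_nonneg L) hcoeff).trans hφ.le

theorem div_mul_le_mul_sq {c L m φ : ℝ} (hc0 : 0 ≤ c) (hc1 : c ≤ 1) (hL : 1 ≤ L) (hm : 0 ≤ m)
    (hφ : 1 ≤ φ) :
    (1 - c) * c ^ 5 * m / (512 * Real.exp 1 ^ 10 * L ^ 10) * (φ * (φ - 1)) ≤ m * φ ^ 2 := by
  have hc : (1 - c) * c ^ 5 ≤ 1 :=
    mul_le_one₀ (by linarith) (by positivity) (pow_le_one₀ hc0 hc1)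
  have hden : 1 ≤ 512 * Real.exp 1 ^ 10 * L ^ 10 := one_le_mul_of_one_le_of_one_le
    (one_le_mul_of_one_le_of_one_le (by norm_num) (one_le_pow₀ (Real.one_le_exp zero_le_one)))
    (one_le_pow₀ hL)
  have hfactor : (1 - c) * c ^ 5 * m / (512 * Real.exp 1 ^ 10 * L ^ 10) ≤ m :=
    div_le_of_le_mul₀ (by linarith) hm
      ((mul_le_of_le_one_left hm hc).trans (le_mul_of_one_le_right hm hden))
  calc _ ≤ m * (φ * φ) := by
        gcongr
        linarith
    _ = m * φ ^ 2 := by ring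

theorem stmt3 (c : ℝ) (hc0 : 0 < c) (hc1 : c < 1) :
    ∀ᶠ m : ℕ in atTop, ∀ q : ℕ, 0 < q → Squarefree q →
      8 * c⁻¹ * Real.exp 1 ^ 2 * Real.log m ^ 2 < (q.totient : ℝ) →
      (1 - c) * c ^ 5 * (m : ℝ) / (512 * Real.exp 1 ^ 10 * Real.log m ^ 10) *
          ((q.totient : ℝ) * ((q.totient : ℝ) - 1)) ≤
        ({a : Fin m → (ZMod q)ˣ | Tendsto (consecCount q m a) atTop atTop}.ncard : ℝ) := by
  filter_upwards [stmt3_general, tendsto_log_natCast_atTop.eventually_ge_atTop 1]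
    with m hm hlog q hq _ hφ
  have htotient : (1 : ℝ) ≤ q.totient := by exact_mod_cast Nat.totient_pos.2 hq
  exact (div_mul_le_mul_sq hc0.le hc1.le hlog m.cast_nonneg htotient).trans
    (hm q hq (sq_le_of_mul_sq_lt hc0 hc1.le hφ))
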